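/- arXiv:0712.1074 — 2 statements merged into one kernel-verified Lean document; each statement's English description precedes it below -/
import Mathlib

section
/- Let M > 0 be real, p ≥ 5 an integer, and let Λ₁, Λ₂ ⊆ F_2^n be disjoint sets whose union belongs to the family 𝚲(4p). Let Q ⊆ Λ₁ + Λ₂. For λ ∈ Λ₁ set D(λ) = { λ' ∈ Λ₂ : λ + λ' ∈ Q }; let s₂ = |Λ₂|, let λ_1, …, λ_{s₁} be the elements of Λ₁ with D(λ) ≠ ∅, and write D_j = D(λ_j). Assume |Q| ≥ max{ 2s₂p, 2^8 s₂ p M^8 }, set δ₀ = max{ p log(2eM)/log(|Q|/(s₂p)), 1 } and X = max{ δ₀^{4δ₀}, 1 }. Then T_p(Q) ≤ 2^{5p} X p^{3p} s₂^p · Σ_{r=p−⌈δ₀⌉}^{p} (1/(p s₂))^r · ( Σ_{S ⊆ [s₁], |S| = r} Π_{α∈S} ( Σ_{β∈S} |D_α ∩ D_β| ) ) + p^{2p}|Q|^p/(2M^p). Here log denotes the logarithm to base 2. -/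
open Finset Pointwise

/-- `T_k(A)`: the number of `2k`-tuples `(a_1,…,a_k,a'_1,…,a'_k) ∈ A^{2k}` with
`a_1+⋯+a_k = a'_1+⋯+a'_k`. -/
def addEnergy {G : Type*} [AddCommGroup G] [DecidableEq G] (k : ℕ) (A : Finset G) : ℕ :=
  (((Fintype.piFinset fun _ : Fin k => A) ×ˢ (Fintype.piFinset fun _ : Fin k => A)).filter
    fun v => ∑ i, v.1 i = ∑ i, v.2 i).card

/-- `Λ` belongs to the family `𝚲(m)`: no nonempty subset of `Λ` of size at most `m`
has zero sum. -/
def InLambdaFamily {G : Type*} [AddCommGroup G] (m : ℕ) (Λ : Finset G) : Prop :=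
  ∀ S ⊆ Λ, S.Nonempty → S.card ≤ m → ∑ x ∈ S, x ≠ 0


lemma exists_invol_aux {J : Type*} [Fintype J] (h : Even (Fintype.card J)) :
    ∃ a : J → J, (∀ i, a i ≠ i) ∧ (∀ i, a (a i) = i) := by
  obtain ⟨k, hk⟩ := h
  have e : J ≃ Fin k × Bool := by
    apply Fintype.equivOfCardEq
    simp [hk]; ring
  refine ⟨fun j => e.symm ((e j).1, !(e j).2), ?_, ?_⟩
  · intro i hi
    have := congrArg (fun j => (e j).2) hi
    simp at this
  · intro i
    simp

lemma exists_invol {I V : Type*} [Fintype I] [DecidableEq V] (f : I → V)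
    (h : ∀ v, Even ((univ.filter fun i => f i = v).card)) :
    ∃ a : I → I, (∀ i, a i ≠ i) ∧ (∀ i, a (a i) = i) ∧ ∀ i, f (a i) = f i := by
  have h1 : ∀ v, ∃ a : {i // f i = v} → {i // f i = v}, (∀ i, a i ≠ i) ∧ (∀ i, a (a i) = i) := by
    intro v
    apply exists_invol_aux
    rw [Fintype.card_subtype]
    exact h v
  choose a ha1 ha2 using h1
  have key : ∀ i, f (a (f i) ⟨i, rfl⟩).1 = f i := fun i => (a (f i) ⟨i, rfl⟩).2
  have key2 : ∀ v (x y : {i // f i = v}) , x.1 = y.1 → x = y := fun v x y h => Subtype.ext h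
  refine ⟨fun i => (a (f i) ⟨i, rfl⟩).1, ?_, ?_, key⟩
  · intro i hi
    exact ha1 (f i) ⟨i, rfl⟩ (Subtype.ext hi)
  · intro i
    have gen : ∀ v (j : I) (hj : f j = v), (a (f j) ⟨j, rfl⟩).1 = (a v ⟨j, hj⟩).1 := by
      rintro v j rfl; rfl
    dsimp only
    rw [gen (f i) _ (key i)]
    exact congrArg Subtype.val (ha2 (f i) ⟨i, rfl⟩)

lemma exists_coloring {I : Type*} [Finite I] (a b : I → I)
    (ha : ∀ i, a i ≠ i) (ha2 : ∀ i, a (a i) = i)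
    (hb : ∀ i, b i ≠ i) (hb2 : ∀ i, b (b i) = i) :
    ∃ c : I → Prop, (∀ i, c (a i) ↔ ¬ c i) ∧ (∀ i, c (b i) ↔ ¬ c i) := by
  classical
  let α : Equiv.Perm I := ⟨a, a, ha2, ha2⟩
  let β : Equiv.Perm I := ⟨b, b, hb2, hb2⟩
  have hα : α * α = 1 := Equiv.ext ha2
  have hβ : β * β = 1 := Equiv.ext hb2
  let ρ : Equiv.Perm I := α * β
  have hαi : α⁻¹ = α := inv_eq_of_mul_eq_one_left hα
  have hβi : β⁻¹ = β := inv_eq_of_mul_eq_one_left hβ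
  have hconj : ∀ k : ℤ, α * ρ ^ k = ρ ^ (-k) * α := by
    intro k
    have h0 : α * ρ * α⁻¹ = ρ⁻¹ := by
      simp only [ρ, mul_inv_rev, hαi, hβi]
      rw [← mul_assoc, hα, one_mul]
    have h1 : α * ρ ^ k * α⁻¹ = ρ ^ (-k) := by
      rw [← conj_zpow, h0, inv_zpow, zpow_neg]
    rw [← h1]; group
  have hαρ : α * ρ = β := by simp only [ρ]; rw [← mul_assoc, hα, one_mul]
  have hns : ∀ i, ¬ ρ.SameCycle i (a i) := by
    rintro i ⟨k, hk⟩
    have hfix : (α * ρ ^ k) i = i := by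
      rw [Equiv.Perm.mul_apply, hk]; exact ha2 i
    rcases Int.even_or_odd' k with ⟨l, rfl | rfl⟩
    · have : α * ρ ^ (2 * l) = ρ ^ (-l) * α * ρ ^ l := by
        rw [two_mul, zpow_add, ← mul_assoc, hconj]
      rw [this] at hfix
      have h3 : α ((ρ ^ l) i) = (ρ ^ l) i := by
        rw [mul_assoc, Equiv.Perm.mul_apply, zpow_neg, Equiv.Perm.inv_eq_iff_eq] at hfix
        exact hfix
      exact ha _ h3
    · have : α * ρ ^ (2 * l + 1) = ρ ^ (-l) * β * ρ ^ l := by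
        rw [show 2 * l + 1 = l + (1 + l) by ring, zpow_add, ← mul_assoc, hconj, zpow_add, zpow_one,
          ← hαρ]
        simp only [mul_assoc]
      rw [this] at hfix
      have h3 : β ((ρ ^ l) i) = (ρ ^ l) i := by
        rw [mul_assoc, Equiv.Perm.mul_apply, zpow_neg, Equiv.Perm.inv_eq_iff_eq] at hfix
        exact hfix
      exact hb _ h3
  let s : Setoid I := Equiv.Perm.SameCycle.setoid ρ
  let q : I → Quotient s := fun i => Quotient.mk s i
  obtain ⟨m, ⟨em⟩⟩ := Finite.exists_equiv_fin (Quotient s)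
  have hq : ∀ i, em (q i) ≠ em (q (a i)) := by
    intro i h
    exact hns i (Quotient.exact (em.injective h))
  have hq1 : ∀ i, q (b i) = q (a i) := by
    intro i
    apply Quotient.sound
    refine ⟨1, ?_⟩
    simp [ρ, α, β, hb2]
  have hq2 : ∀ i, q (a (b i)) = q i := by
    intro i
    apply Quotient.sound
    refine ⟨-1, ?_⟩
    have : a (b i) = ρ i := rfl
    rw [this]; simp
  refine ⟨fun i => em (q i) < em (q (a i)), ?_, ?_⟩
  · intro i
    simp only [ha2, not_lt]
    exact ⟨le_of_lt, fun h => lt_of_le_of_ne h (hq i).symm⟩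
  · intro i
    simp only [hq1, hq2, not_lt]
    exact ⟨le_of_lt, fun h => lt_of_le_of_ne h (hq i).symm⟩

lemma exists_split {p : ℕ} {V : Type*} [DecidableEq V] (f g : Fin p ⊕ Fin p → V)
    (hf : ∀ v, Even ((univ.filter fun i => f i = v).card))
    (hg : ∀ v, Even ((univ.filter fun i => g i = v).card)) :
    ∃ B : Finset (Fin p ⊕ Fin p), B.card = p ∧
      ∀ e : Fin p ⊕ Fin p ≃ Fin p ⊕ Fin p, (∀ i, e (.inl i) ∈ B) → (∀ i, e (.inr i) ∉ B) →
        (∀ i, ∃ j, f (e (.inr i)) = f (e (.inl j))) ∧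
        ∃ τ : Equiv.Perm (Fin p), ∀ i, g (e (.inr i)) = g (e (.inl (τ i))) := by
  classical
  obtain ⟨a, ha1, ha2, ha3⟩ := exists_invol f hf
  obtain ⟨b, hb1, hb2, hb3⟩ := exists_invol g hg
  obtain ⟨c, hca, hcb⟩ := exists_coloring a b ha1 ha2 hb1 hb2
  refine ⟨univ.filter c, ?_, ?_⟩
  · have h1 : (univ.filter c).card = (univ.filter fun i => ¬ c i).card := by
      apply Finset.card_bij' (fun i _ => a i) (fun i _ => a i) <;> simp [hca, ha2]
    have h2 := Finset.card_filter_add_card_filter_not (s := (univ : Finset (Fin p ⊕ Fin p))) c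
    simp at h2
    omega
  · intro e he1 he2
    simp only [mem_filter, mem_univ, true_and] at he1 he2
    have hl : ∀ x, c x → ∃ j, e (.inl j) = x := by
      intro x hx
      obtain ⟨y, rfl⟩ := e.surjective x
      rcases y with y | y
      · exact ⟨y, rfl⟩
      · exact absurd hx (he2 y)
    have hA : ∀ i, ∃ j, e (.inl j) = a (e (.inr i)) := fun i => hl _ ((hca _).2 (he2 i))
    have hB : ∀ i, ∃ j, e (.inl j) = b (e (.inr i)) := fun i => hl _ ((hcb _).2 (he2 i))
    constructor
    · intro i
      obtain ⟨j, hj⟩ := hA i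
      exact ⟨j, by rw [hj, ha3]⟩
    · choose t ht using hB
      have hinj : Function.Injective t := by
        intro i j hij
        have h1 := ht i
        rw [hij, ht j] at h1
        have h2 := congrArg b h1
        rw [hb2, hb2] at h2
        exact (Sum.inr_injective (e.injective h2)).symm
      refine ⟨Equiv.ofBijective t (Finite.injective_iff_bijective.1 hinj), fun i => ?_⟩
      rw [Equiv.ofBijective_apply, ht, hb3]

lemma exists_equiv_of_card {p : ℕ} (B : Finset (Fin p ⊕ Fin p)) (hB : B.card = p) :
    ∃ e : Fin p ⊕ Fin p ≃ Fin p ⊕ Fin p, (∀ i, e (.inl i) ∈ B) ∧ (∀ i, e (.inr i) ∉ B) := by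
  classical
  have e1 : Fin p ≃ {x // x ∈ B} := Fintype.equivOfCardEq (by simp [hB])
  have e2 : Fin p ≃ {x // ¬ x ∈ B} := Fintype.equivOfCardEq (by
    rw [Fintype.card_subtype_compl]; simp [hB])
  refine ⟨(Equiv.sumCongr e1 e2).trans (Equiv.sumCompl (fun x => x ∈ B)), ?_, ?_⟩
  · intro i; simp
  · intro i; simpa using (e2 i).2

lemma even_fibers {n m : ℕ} {I : Type*} [Fintype I] (hI : 2 * Fintype.card I ≤ m)
    (Λ₁ Λ₂ : Finset (Fin n → ZMod 2)) (hdisj : Disjoint Λ₁ Λ₂)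
    (hΛ : ∀ S ⊆ Λ₁ ∪ Λ₂, S.Nonempty → S.card ≤ m → ∑ x ∈ S, x ≠ 0)
    (f g : I → Fin n → ZMod 2) (hf : ∀ i, f i ∈ Λ₁) (hg : ∀ i, g i ∈ Λ₂)
    (hsum : ∑ i, (f i + g i) = 0) :
    (∀ v, Even ((univ.filter fun i => f i = v).card)) ∧
    (∀ v, Even ((univ.filter fun i => g i = v).card)) := by
  classical
  let h : I ⊕ I → Fin n → ZMod 2 := Sum.elim f g
  have hh : ∀ i, h i ∈ Λ₁ ∪ Λ₂ := by
    rintro (i | i)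
    · exact mem_union_left _ (hf i)
    · exact mem_union_right _ (hg i)
  have hcard : ∀ v, (univ.filter fun i => h i = v).card =
      (univ.filter fun i => f i = v).card + (univ.filter fun i => g i = v).card := by
    intro v
    simp only [Finset.card_filter, Fintype.sum_sum_type, h, Sum.elim_inl, Sum.elim_inr]
    congr
  have hs : ∑ i, h i = 0 := by
    rw [Fintype.sum_sum_type, ← hsum, Finset.sum_add_distrib]; rfl
  let S := (Λ₁ ∪ Λ₂).filter fun v => ¬ Even ((univ.filter fun i => h i = v).card)
  have hS0 : ∑ x ∈ S, x = 0 := by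
    rw [← hs, ← Finset.sum_fiberwise_of_maps_to (s := univ) (t := Λ₁ ∪ Λ₂) (g := h) (fun i _ => hh i),
      Finset.sum_filter]
    apply Finset.sum_congr rfl
    intro v _
    rw [Finset.sum_congr rfl (g := fun _ => v) (by intro i hi; exact (mem_filter.1 hi).2),
      Finset.sum_const]
    have hv : v + v = 0 := by
      funext j; exact CharTwo.add_self_eq_zero (v j)
    split_ifs with hp
    · obtain ⟨k, hk⟩ := hp
      rw [hk, add_smul, ← smul_add, hv]; simp
    · obtain ⟨k, hk⟩ := Nat.not_even_iff_odd.1 hp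
      rw [hk, add_smul, mul_comm, mul_smul, one_smul, two_smul, hv]; simp
  have hScard : S.card ≤ m := by
    have : S ⊆ univ.image h := by
      intro v hv
      have h2 := (mem_filter.1 hv).2
      by_contra hc
      apply h2
      have : (univ.filter fun i => h i = v) = ∅ := by
        apply Finset.filter_eq_empty_iff.2
        intro i _ hi
        exact hc (mem_image.2 ⟨i, mem_univ _, hi⟩)
      rw [this]; simp
    calc S.card ≤ (univ.image h).card := card_le_card this
      _ ≤ (univ : Finset (I ⊕ I)).card := card_image_le
      _ = 2 * Fintype.card I := by simp; ring
      _ ≤ m := hI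
  have hSe : ¬ S.Nonempty := fun hne => hΛ S (filter_subset _ _) hne hScard hS0
  rw [not_nonempty_iff_eq_empty] at hSe
  have hev : ∀ v ∈ Λ₁ ∪ Λ₂, Even ((univ.filter fun i => h i = v).card) := by
    intro v hv
    by_contra hc
    have : v ∈ S := mem_filter.2 ⟨hv, hc⟩
    rw [hSe] at this; simp at this
  have zf : ∀ v, v ∉ Λ₁ → (univ.filter fun i => f i = v).card = 0 := by
    intro v hv
    rw [card_eq_zero, filter_eq_empty_iff]
    rintro i _ rfl; exact hv (hf i)
  have zg : ∀ v, v ∉ Λ₂ → (univ.filter fun i => g i = v).card = 0 := by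
    intro v hv
    rw [card_eq_zero, filter_eq_empty_iff]
    rintro i _ rfl; exact hv (hg i)
  constructor
  · intro v
    by_cases hv : v ∈ Λ₁
    · have := hev v (mem_union_left _ hv)
      rwa [hcard, zg v (fun h2 => (Finset.disjoint_left.1 hdisj hv h2)), add_zero] at this
    · rw [zf v hv]; simp
  · intro v
    by_cases hv : v ∈ Λ₂
    · have := hev v (mem_union_right _ hv)
      rwa [hcard, zf v (fun h2 => (Finset.disjoint_left.1 hdisj h2 hv)), zero_add] at this
    · rw [zg v hv]; simp

lemma esymm_le {V : Type*} [DecidableEq V] (d : V → ℝ) (hd : ∀ v, 0 ≤ d v) (A : Finset V) :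
    ∀ r : ℕ, (r.factorial : ℝ) * ∑ S ∈ A.powersetCard r, ∏ a ∈ S, d a ≤ (∑ a ∈ A, d a) ^ r := by
  induction A using Finset.induction_on with
  | empty =>
    intro r
    cases r with
    | zero => simp
    | succ r => rw [powersetCard_eq_empty.2 (by simp)]; simp
  | insert x A hx ih =>
    intro r
    cases r with
    | zero => simp
    | succ r =>
      rw [Finset.powersetCard_succ_insert hx, Finset.sum_union, Finset.sum_image, Finset.sum_insert hx]
      · have h1 : ∑ S ∈ A.powersetCard r, ∏ a ∈ insert x S, d a
            = d x * ∑ S ∈ A.powersetCard r, ∏ a ∈ S, d a := by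
          rw [Finset.mul_sum]
          apply Finset.sum_congr rfl
          intro S hS
          rw [Finset.prod_insert (fun h => hx ((mem_powersetCard.1 hS).1 h))]
        rw [h1]
        have i1 := ih (r + 1)
        have i2 := ih r
        set E1 := ∑ S ∈ A.powersetCard (r + 1), ∏ a ∈ S, d a
        set E0 := ∑ S ∈ A.powersetCard r, ∏ a ∈ S, d a
        have hs : 0 ≤ ∑ a ∈ A, d a := Finset.sum_nonneg fun a _ => hd a
        set s := ∑ a ∈ A, d a
        have hb : ∀ k : ℕ, s ^ (k + 1) + (k + 1) * (d x * s ^ k) ≤ (d x + s) ^ (k + 1) := by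
          intro k
          induction k with
          | zero => simp; linarith
          | succ k ihk =>
            have hdx := hd x
            have hk : 0 ≤ ((k : ℝ) + 1) * (d x ^ 2 * s ^ k) := by positivity
            calc s ^ (k + 1 + 1) + ((k + 1 : ℕ) + 1) * (d x * s ^ (k + 1))
                ≤ (d x + s) * (s ^ (k + 1) + (k + 1) * (d x * s ^ k)) := by
                  push_cast
                  ring_nf
                  ring_nf at hk
                  nlinarith
              _ ≤ (d x + s) * (d x + s) ^ (k + 1) := by gcongr
              _ = _ := by ring
        have hf : ((r + 1).factorial : ℝ) = (r + 1) * r.factorial := by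
          rw [Nat.factorial_succ]; push_cast; ring
        calc ((r + 1).factorial : ℝ) * (E1 + d x * E0)
            = (r + 1).factorial * E1 + (r + 1) * (d x * (r.factorial * E0)) := by
              rw [mul_add, hf]; ring
          _ ≤ s ^ (r + 1) + (r + 1) * (d x * s ^ r) := by
              have := hd x
              gcongr
          _ ≤ _ := hb r
      · intro S hS T hT hST
        simp only [Finset.mem_coe, mem_powersetCard] at hS hT
        have h1 : x ∉ S := fun h => hx (hS.1 h)
        have h2 : x ∉ T := fun h => hx (hT.1 h)
        rw [← erase_insert h1, ← erase_insert h2]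
        exact congrArg (fun U => erase U x) hST
      · rw [Finset.disjoint_left]
        intro S hS hS2
        rw [mem_image] at hS2
        obtain ⟨T, _, rfl⟩ := hS2
        exact hx ((mem_powersetCard.1 hS).1 (mem_insert_self _ _))

lemma prod_le_reps {p : ℕ} {V : Type*} [DecidableEq V] (S : Finset V) (α : Fin p → V)
    (hα : univ.image α = S) (W : V → ℕ) (C : ℕ) (hW : ∀ v ∈ S, W v ≤ C) :
    ∏ j, W (α j) ≤ C ^ (p - S.card) * ∏ s ∈ S, W s := by
  have h1 : ∀ s : {s // s ∈ S}, ∃ i, α i = s := by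
    rintro ⟨s, hs⟩
    rw [← hα, mem_image] at hs
    obtain ⟨i, _, hi⟩ := hs
    exact ⟨i, hi⟩
  choose ι hι using h1
  have hinj : Function.Injective ι := by
    intro s t h
    apply Subtype.ext
    rw [← hι s, ← hι t, h]
  let K : Finset (Fin p) := S.attach.image ι
  have hK : K.card = S.card := by
    rw [card_image_of_injective _ hinj, card_attach]
  have hKp : ∏ j ∈ K, W (α j) = ∏ s ∈ S, W s := by
    rw [Finset.prod_image (fun _ _ _ _ h => hinj h), ← Finset.prod_attach S]
    apply Finset.prod_congr rfl
    intro s _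
    rw [hι]
  have hKc : ∏ j ∈ Kᶜ, W (α j) ≤ C ^ (p - S.card) := by
    have : Kᶜ.card = p - S.card := by rw [card_compl, hK, Fintype.card_fin]
    rw [← this]
    apply Finset.prod_le_pow_card
    intro j _
    apply hW
    rw [← hα]; exact mem_image_of_mem _ (mem_univ _)
  rw [← Finset.prod_mul_prod_compl K, hKp, mul_comm]
  exact Nat.mul_le_mul_right _ hKc

def Gset {p : ℕ} {V : Type*} [DecidableEq V] (D : V → Finset V) (S : Finset V)
    (τ : Equiv.Perm (Fin p)) :
    Finset (Σ _ : (Fin p → V) × (Fin p → V), (Fin p → V)) :=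
  (((Fintype.piFinset fun _ : Fin p => S).filter fun α => univ.image α = S) ×ˢ
    (Fintype.piFinset fun _ : Fin p => S)).sigma
      fun q => Fintype.piFinset fun i => D (q.1 i) ∩ D (q.2 (τ.symm i))

lemma Gset_card {p : ℕ} {V : Type*} [DecidableEq V] (D : V → Finset V) (S : Finset V)
    (τ : Equiv.Perm (Fin p)) (s₂ : ℕ) (hD : ∀ a, (D a).card ≤ s₂) :
    (Gset D S τ).card ≤ S.card ^ p * ((S.card * s₂) ^ (p - S.card) *
      ∏ a ∈ S, ∑ b ∈ S, (D a ∩ D b).card) := by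
  rw [Gset, card_sigma, sum_product]
  have key : ∀ α ∈ ((Fintype.piFinset fun _ : Fin p => S).filter fun α => univ.image α = S),
      ∑ β ∈ (Fintype.piFinset fun _ : Fin p => S),
        (Fintype.piFinset fun i => D (α i) ∩ D (β (τ.symm i))).card ≤
      ((S.card * s₂) ^ (p - S.card) * ∏ a ∈ S, ∑ b ∈ S, (D a ∩ D b).card) := by
    intro α hα
    have e1 : ∀ β : Fin p → V, (Fintype.piFinset fun i => D (α i) ∩ D (β (τ.symm i))).card
        = ∏ j, (D (α (τ j)) ∩ D (β j)).card := by
      intro β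
      rw [Fintype.card_piFinset, ← Equiv.prod_comp τ]
      simp
    rw [Finset.sum_congr rfl (fun β _ => e1 β),
      ← Finset.prod_univ_sum (fun _ : Fin p => S) (fun j b => (D (α (τ j)) ∩ D b).card),
      Equiv.prod_comp τ (fun j => ∑ b ∈ S, (D (α j) ∩ D b).card)]
    refine prod_le_reps S α (mem_filter.1 hα).2 (fun a => ∑ b ∈ S, (D a ∩ D b).card) _ ?_
    intro v _
    rw [← smul_eq_mul]
    apply Finset.sum_le_card_nsmul
    intro b _
    exact (card_le_card inter_subset_left).trans (hD v)
  refine (Finset.sum_le_card_nsmul _ _ _ key).trans ?_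
  rw [smul_eq_mul]
  apply Nat.mul_le_mul_right
  refine (card_filter_le _ _).trans ?_
  rw [Fintype.card_piFinset]; simp

lemma energy_bound {n : ℕ} (p : ℕ)
    (Λ₁ Λ₂ : Finset (Fin n → ZMod 2)) (hdisj : Disjoint Λ₁ Λ₂)
    (hΛ : InLambdaFamily (4 * p) (Λ₁ ∪ Λ₂))
    (Q : Finset (Fin n → ZMod 2)) (hQ : Q ⊆ Λ₁ + Λ₂)
    (D : (Fin n → ZMod 2) → Finset (Fin n → ZMod 2))
    (hD : ∀ l, D l = Λ₂.filter fun l' => l + l' ∈ Q)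
    (Λ₁' : Finset (Fin n → ZMod 2))
    (hΛ₁' : Λ₁' = Λ₁.filter fun l => (D l).Nonempty) :
    addEnergy p Q ≤ ∑ r ∈ range (p + 1), (2 * p).choose p * (p.factorial *
      (r ^ p * ((r * Λ₂.card) ^ (p - r) *
        ∑ S ∈ Λ₁'.powersetCard r, ∏ a ∈ S, ∑ b ∈ S, (D a ∩ D b).card))) := by
  classical
  have hq : ∀ q : Fin n → ZMod 2, ∃ l : (Fin n → ZMod 2) × (Fin n → ZMod 2),
      q ∈ Q → l.1 ∈ Λ₁ ∧ l.2 ∈ Λ₂ ∧ l.1 + l.2 = q := by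
    intro q
    by_cases h : q ∈ Q
    · obtain ⟨a, ha, b, hb, hab⟩ := Finset.mem_add.1 (hQ h)
      exact ⟨(a, b), fun _ => ⟨ha, hb, hab⟩⟩
    · exact ⟨0, fun h' => absurd h' h⟩
  choose L hL using hq
  have heq : ∀ B : Finset (Fin p ⊕ Fin p), ∃ e : Fin p ⊕ Fin p ≃ Fin p ⊕ Fin p,
      B.card = p → (∀ i, e (.inl i) ∈ B) ∧ (∀ i, e (.inr i) ∉ B) := by
    intro B
    by_cases h : B.card = p
    · obtain ⟨e, he⟩ := exists_equiv_of_card B h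
      exact ⟨e, fun _ => he⟩
    · exact ⟨Equiv.refl _, fun h' => absurd h' h⟩
  choose e he using heq
  let u : (Equiv.Perm (Fin p)) → (Σ _ : (Fin p → Fin n → ZMod 2) × (Fin p → Fin n → ZMod 2),
      (Fin p → Fin n → ZMod 2)) → Fin p ⊕ Fin p → Fin n → ZMod 2 := fun τ z =>
    Sum.elim (fun i => z.1.1 i + z.2 i) (fun i => z.1.2 i + z.2 (τ i))
  let ψ : Finset (Fin p ⊕ Fin p) → (Equiv.Perm (Fin p)) →
      (Σ _ : (Fin p → Fin n → ZMod 2) × (Fin p → Fin n → ZMod 2), (Fin p → Fin n → ZMod 2)) →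
      (Fin p → Fin n → ZMod 2) × (Fin p → Fin n → ZMod 2) := fun B τ z =>
    (fun i => u τ z ((e B).symm (.inl i)), fun i => u τ z ((e B).symm (.inr i)))
  have hcover : (((Fintype.piFinset fun _ : Fin p => Q) ×ˢ
      (Fintype.piFinset fun _ : Fin p => Q)).filter fun v => ∑ i, v.1 i = ∑ i, v.2 i) ⊆
      (range (p + 1)).biUnion fun r => (univ.powersetCard p).biUnion fun B =>
        univ.biUnion fun τ : Equiv.Perm (Fin p) => (Λ₁'.powersetCard r).biUnion fun S =>
          (Gset D S τ).image (ψ B τ) := by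
    intro v hv
    rw [mem_filter, mem_product, Fintype.mem_piFinset, Fintype.mem_piFinset] at hv
    obtain ⟨⟨hv1, hv2⟩, hv3⟩ := hv
    let U : Fin p ⊕ Fin p → Fin n → ZMod 2 := Sum.elim v.1 v.2
    have hU : ∀ i, U i ∈ Q := by
      rintro (i | i)
      · exact hv1 i
      · exact hv2 i
    let f := fun i => (L (U i)).1
    let g := fun i => (L (U i)).2
    have hfg : ∀ i, f i + g i = U i := fun i => (hL _ (hU i)).2.2
    have hf : ∀ i, f i ∈ Λ₁ := fun i => (hL _ (hU i)).1
    have hg : ∀ i, g i ∈ Λ₂ := fun i => (hL _ (hU i)).2.1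
    have hgD : ∀ i, g i ∈ D (f i) := by
      intro i
      rw [hD, mem_filter, hfg]
      exact ⟨hg i, hU i⟩
    have hf' : ∀ i, f i ∈ Λ₁' := by
      intro i
      rw [hΛ₁', mem_filter]
      exact ⟨hf i, ⟨_, hgD i⟩⟩
    have hsum : ∑ i, (f i + g i) = 0 := by
      rw [Finset.sum_congr rfl (fun i _ => hfg i), Fintype.sum_sum_type]
      simp only [Sum.elim_inl, Sum.elim_inr]
      rw [hv3]
      funext j; exact CharTwo.add_self_eq_zero (R := ZMod 2) _
    obtain ⟨ef, eg⟩ := even_fibers (m := 4 * p) (by simp; omega) Λ₁ Λ₂ hdisj hΛ f g hf hg hsum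
    obtain ⟨B, hB, hB2⟩ := exists_split f g ef eg
    obtain ⟨h1, τ, h2⟩ := hB2 (e B) (he B hB).1 (he B hB).2
    let αL : Fin p → Fin n → ZMod 2 := fun i => f (e B (.inl i))
    let αR : Fin p → Fin n → ZMod 2 := fun i => f (e B (.inr i))
    let x : Fin p → Fin n → ZMod 2 := fun i => g (e B (.inl i))
    simp only [mem_biUnion]
    refine ⟨(univ.image αL).card, ?_, B, ?_, τ, mem_univ _, univ.image αL, ?_, ?_⟩
    · rw [mem_range]
      have := card_image_le (s := univ) (f := αL)
      simp only [card_univ, Fintype.card_fin] at this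
      omega
    · rw [mem_powersetCard]; exact ⟨subset_univ _, hB⟩
    · rw [mem_powersetCard]
      refine ⟨?_, rfl⟩
      intro a ha
      obtain ⟨i, _, rfl⟩ := mem_image.1 ha
      exact hf' _
    · rw [mem_image]
      refine ⟨⟨(αL, αR), x⟩, ?_, ?_⟩
      · simp only [Gset, mem_sigma, mem_product, mem_filter, Fintype.mem_piFinset, and_true]
        refine ⟨⟨fun i => mem_image_of_mem _ (mem_univ _), fun i => ?_⟩, fun i => ?_⟩
        · obtain ⟨j, hj⟩ := h1 i
          exact mem_image.2 ⟨j, mem_univ _, hj.symm⟩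
        · rw [mem_inter]
          refine ⟨hgD _, ?_⟩
          have h3 := hgD (e B (.inr (τ.symm i)))
          rw [h2, Equiv.apply_symm_apply] at h3
          exact h3
      · have hu : ∀ y, u τ ⟨(αL, αR), x⟩ y = U (e B y) := by
          rintro (y | y)
          · exact hfg _
          · simp only [u, Sum.elim_inr, αR, x]
            rw [← h2, hfg]
        simp only [ψ, hu, Equiv.apply_symm_apply]
        rfl
  rw [_root_.addEnergy]
  refine (card_le_card hcover).trans ?_
  refine card_biUnion_le.trans ?_
  apply Finset.sum_le_sum
  intro r _
  refine (card_biUnion_le_card_mul _ _ (p.factorial *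
      (r ^ p * ((r * Λ₂.card) ^ (p - r) *
        ∑ S ∈ Λ₁'.powersetCard r, ∏ a ∈ S, ∑ b ∈ S, (D a ∩ D b).card))) ?_).trans ?_
  · intro B _
    refine (card_biUnion_le_card_mul _ _ (r ^ p * ((r * Λ₂.card) ^ (p - r) *
        ∑ S ∈ Λ₁'.powersetCard r, ∏ a ∈ S, ∑ b ∈ S, (D a ∩ D b).card)) ?_).trans ?_
    · intro τ _
      refine card_biUnion_le.trans ?_
      rw [Finset.mul_sum, Finset.mul_sum]
      apply Finset.sum_le_sum
      intro S hS
      refine card_image_le.trans ?_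
      have := Gset_card D S τ Λ₂.card (fun a => by rw [hD]; exact card_filter_le _ _)
      rwa [(mem_powersetCard.1 hS).2] at this
    · rw [card_univ, Fintype.card_perm, Fintype.card_fin]
  · rw [card_powersetCard, card_univ, Fintype.card_sum, Fintype.card_fin, two_mul]

lemma sum_card_D_le {n : ℕ} (p : ℕ) (hp : 1 ≤ p)
    (Λ₁ Λ₂ : Finset (Fin n → ZMod 2)) (hdisj : Disjoint Λ₁ Λ₂)
    (hΛ : InLambdaFamily (4 * p) (Λ₁ ∪ Λ₂))
    (Q : Finset (Fin n → ZMod 2))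
    (D : (Fin n → ZMod 2) → Finset (Fin n → ZMod 2))
    (hD : ∀ l, D l = Λ₂.filter fun l' => l + l' ∈ Q)
    (Λ₁' : Finset (Fin n → ZMod 2))
    (hΛ₁' : Λ₁' = Λ₁.filter fun l => (D l).Nonempty) :
    ∑ a ∈ Λ₁', (D a).card ≤ Q.card := by
  classical
  rw [← card_sigma]
  apply Finset.card_le_card_of_injOn (fun z => z.1 + z.2)
  · rintro ⟨a, b⟩ h
    simp only [coe_sigma, Set.mem_sigma_iff, mem_coe, hD, mem_filter] at h
    exact h.2.2
  · rintro ⟨a, b⟩ h ⟨a', b'⟩ h' hab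
    simp only [coe_sigma, Set.mem_sigma_iff, mem_coe, hD, mem_filter, hΛ₁'] at h h'
    simp only at hab
    have hs : ∑ i : Fin 2, (![a, a'] i + ![b, b'] i) = 0 := by
      rw [Fin.sum_univ_two]
      simp only [Matrix.cons_val_zero, Matrix.cons_val_one]
      rw [hab]
      funext j; exact CharTwo.add_self_eq_zero (R := ZMod 2) _
    obtain ⟨ef, -⟩ := even_fibers (m := 4 * p) (by simp; omega) Λ₁ Λ₂ hdisj hΛ ![a, a'] ![b, b']
      (by intro i; fin_cases i; exacts [h.1.1, h'.1.1])
      (by intro i; fin_cases i; exacts [h.2.1, h'.2.1]) hs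
    have haa : a = a' := by
      by_contra hne
      have := ef a
      rw [Finset.card_filter, Fin.sum_univ_two] at this
      simp [Ne.symm hne] at this
    subst haa
    have hbb : b = b' := add_left_cancel hab
    subst hbb
    rfl

lemma term_main (p r s C : ℕ) (hr : r ≤ p) (hp : 0 < p) (hs : 0 < s) (hC : C ≤ 4 ^ p)
    (X P : ℝ) (hX : 1 ≤ X) (hP : 0 ≤ P) :
    (C : ℝ) * ((p.factorial : ℝ) * ((r : ℝ) ^ p * (((r : ℝ) * s) ^ (p - r) * P))) ≤
      2 ^ (5 * p) * X * (p : ℝ) ^ (3 * p) * (s : ℝ) ^ p * ((1 / (p * s : ℝ)) ^ r * P) := by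
  have hC' : (C : ℝ) ≤ 4 ^ p := by exact_mod_cast hC
  have hf : (p.factorial : ℝ) ≤ (p : ℝ) ^ p := by exact_mod_cast Nat.factorial_le_pow p
  have hr' : (r : ℝ) ≤ p := by exact_mod_cast hr
  have hp' : (0 : ℝ) < p := by exact_mod_cast hp
  have hs' : (0 : ℝ) < s := by exact_mod_cast hs
  have h45 : (4 : ℝ) ^ p ≤ 2 ^ (5 * p) * X := by
    rw [pow_mul]
    calc (4 : ℝ) ^ p ≤ (2 ^ 5) ^ p := by gcongr; norm_num
      _ = (2 ^ 5) ^ p * 1 := by ring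
      _ ≤ _ := by gcongr
  calc (C : ℝ) * ((p.factorial : ℝ) * ((r : ℝ) ^ p * (((r : ℝ) * s) ^ (p - r) * P)))
      ≤ (2 ^ (5 * p) * X) * ((p : ℝ) ^ p * ((p : ℝ) ^ p * (((p : ℝ) * s) ^ (p - r) * P))) := by
        have := hC'.trans h45
        gcongr
    _ = _ := by
        obtain ⟨k, rfl⟩ := Nat.exists_eq_add_of_le hr
        rw [Nat.add_sub_cancel_left]
        have : (r + k : ℕ) = ((r + k : ℕ) : ℝ) := rfl
        generalize ((r + k : ℕ) : ℝ) = y at *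
        have e1 : ((s : ℝ) ^ (r + k)) * (1 / (y * s)) ^ r * y ^ (3 * (r + k))
            = y ^ (r + k) * y ^ (r + k) * (y * s) ^ k := by
          have hy : y ≠ 0 := hp'.ne'
          rw [one_div, inv_pow]
          field_simp
          ring
        calc _ = 2 ^ (5 * (r + k)) * X * (y ^ (r + k) * y ^ (r + k) * (y * s) ^ k) * P := by ring
          _ = _ := by rw [← e1]; ring

lemma term_tail (p r s C : ℕ) (hr : r ≤ p) (hp : 0 < p) (hs : 0 < s) (hC : C ≤ 4 ^ p)
    (q P A : ℝ) (hA : 0 < A) (hq : q = A * (s * p)) (hP0 : 0 ≤ P)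
    (hP : (r.factorial : ℝ) * P ≤ (r * q) ^ r) :
    (C : ℝ) * ((p.factorial : ℝ) * ((r : ℝ) ^ p * (((r : ℝ) * s) ^ (p - r) * P))) ≤
      4 ^ p * (p : ℝ) ^ (2 * p) * q ^ p / A ^ (p - r) := by
  have hC' : (C : ℝ) ≤ 4 ^ p := by exact_mod_cast hC
  have hr' : (r : ℝ) ≤ p := by exact_mod_cast hr
  have hp' : (0 : ℝ) < p := by exact_mod_cast hp
  have hs' : (0 : ℝ) < s := by exact_mod_cast hs
  have hq0 : 0 < q := by rw [hq]; positivity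
  have hf : (p.factorial : ℝ) ≤ (r.factorial : ℝ) * (p : ℝ) ^ (p - r) := by
    have h1 := Nat.factorial_mul_descFactorial (Nat.sub_le p r)
    rw [Nat.sub_sub_self hr] at h1
    rw [← h1]
    push_cast
    gcongr
    exact_mod_cast Nat.descFactorial_le_pow p (p - r)
  calc (C : ℝ) * ((p.factorial : ℝ) * ((r : ℝ) ^ p * (((r : ℝ) * s) ^ (p - r) * P)))
      ≤ 4 ^ p * (((r.factorial : ℝ) * (p : ℝ) ^ (p - r)) *
          ((r : ℝ) ^ p * (((r : ℝ) * s) ^ (p - r) * P))) := by gcongr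
    _ = 4 ^ p * ((p : ℝ) ^ (p - r) * (r : ℝ) ^ p * ((r : ℝ) * s) ^ (p - r)) *
          ((r.factorial : ℝ) * P) := by ring
    _ ≤ 4 ^ p * ((p : ℝ) ^ (p - r) * (p : ℝ) ^ p * ((p : ℝ) * s) ^ (p - r)) * (p * q) ^ r := by
        have : (r.factorial : ℝ) * P ≤ (p * q) ^ r := hP.trans (by gcongr)
        gcongr
    _ = _ := by
        obtain ⟨k, rfl⟩ := Nat.exists_eq_add_of_le hr
        rw [Nat.add_sub_cancel_left]
        generalize ((r + k : ℕ) : ℝ) = y at *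
        rw [eq_div_iff (by positivity)]
        rw [pow_add q r k]
        nth_rewrite 3 [hq]
        ring

lemma pow_bound (p : ℕ) (hp : 5 ≤ p) : (2 : ℝ) * 4 ^ p ≤ (2 * Real.exp 1) ^ p := by
  have he : (2.7 : ℝ) ≤ Real.exp 1 := by
    have := Real.exp_one_gt_d9; linarith
  obtain ⟨k, rfl⟩ := Nat.exists_eq_add_of_le hp
  calc (2 : ℝ) * 4 ^ (5 + k) = (2 * 4 ^ 5) * 4 ^ k := by ring
    _ ≤ (2 * 2.7) ^ 5 * (2 * 2.7) ^ k := by gcongr <;> norm_num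
    _ = (2 * 2.7) ^ (5 + k) := by ring
    _ ≤ _ := by gcongr

lemma A_bound (p : ℕ) (Y A δ : ℝ) (hY : 0 < Y) (hA : 2 ≤ A)
    (hδ : p * Real.logb 2 Y / Real.logb 2 A ≤ δ) : Y ^ p ≤ A ^ ⌈δ⌉₊ := by
  have hL : 0 < Real.logb 2 A := Real.logb_pos (by norm_num) (by linarith)
  rw [div_le_iff₀ hL] at hδ
  have h1 : Y ^ p ≤ A ^ δ := by
    rw [← Real.logb_le_logb (b := 2) (by norm_num) (by positivity) (by positivity),
      Real.logb_pow, Real.logb_rpow_eq_mul_logb_of_pos (by linarith)]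
    exact hδ
  refine h1.trans ?_
  rw [← Real.rpow_natCast]
  exact Real.rpow_le_rpow_of_exponent_le (by linarith) (Nat.le_ceil δ)

set_option maxHeartbeats 1000000 in
theorem stmt14 {n : ℕ} (M : ℝ) (hM : 0 < M) (p : ℕ) (hp : 5 ≤ p)
    (Λ₁ Λ₂ : Finset (Fin n → ZMod 2)) (hdisj : Disjoint Λ₁ Λ₂)
    (hΛ : InLambdaFamily (4 * p) (Λ₁ ∪ Λ₂))
    (Q : Finset (Fin n → ZMod 2)) (hQ : Q ⊆ Λ₁ + Λ₂)
    (D : (Fin n → ZMod 2) → Finset (Fin n → ZMod 2))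
    (hD : ∀ l, D l = Λ₂.filter fun l' => l + l' ∈ Q)
    (s₂ : ℕ) (hs₂ : s₂ = Λ₂.card)
    (Λ₁' : Finset (Fin n → ZMod 2))
    (hΛ₁' : Λ₁' = Λ₁.filter fun l => (D l).Nonempty)
    (hQcard : max (2 * s₂ * p : ℝ) (2 ^ 8 * s₂ * p * M ^ 8) ≤ (Q.card : ℝ))
    (δ₀ X : ℝ)
    (hδ₀ : δ₀ = max ((p * Real.logb 2 (2 * Real.exp 1 * M)) /
      Real.logb 2 ((Q.card : ℝ) / (s₂ * p))) 1)
    (hX : X = max (δ₀ ^ (4 * δ₀)) 1) :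
    (addEnergy p Q : ℝ) ≤
      2 ^ (5 * p) * X * (p : ℝ) ^ (3 * p) * (s₂ : ℝ) ^ p *
        (∑ r ∈ Finset.Icc (p - ⌈δ₀⌉₊) p,
          (1 / (p * s₂ : ℝ)) ^ r *
            ∑ S ∈ Λ₁'.powersetCard r,
              ∏ a ∈ S, (∑ b ∈ S, ((D a ∩ D b).card : ℝ)))
      + (p : ℝ) ^ (2 * p) * (Q.card : ℝ) ^ p / (2 * M ^ p) := by
  have hX1 : 1 ≤ X := by rw [hX]; exact le_max_right _ _
  have hp0 : 0 < p := by omega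
  have hpR : (0 : ℝ) < p := by exact_mod_cast hp0
  rcases Nat.eq_zero_or_pos s₂ with h0 | hs
  · have hΛ2 : Λ₂ = ∅ := by rw [← card_eq_zero, ← hs₂, h0]
    have hQ0 : Q = ∅ := by
      rw [hΛ2, Finset.add_empty] at hQ
      exact Finset.subset_empty.1 hQ
    have hE : _root_.addEnergy p Q = 0 := by
      rw [_root_.addEnergy, card_eq_zero, filter_eq_empty_iff]
      intro v hv
      rw [mem_product, Fintype.mem_piFinset] at hv
      have := hv.1 ⟨0, hp0⟩
      rw [hQ0] at this
      simp at this
    rw [hE, Nat.cast_zero]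
    positivity
  have hsR : (0 : ℝ) < s₂ := by exact_mod_cast hs
  set q : ℝ := (Q.card : ℝ) with hqdef
  set A : ℝ := q / (s₂ * p) with hAdef
  have hA2 : 2 ≤ A := by
    rw [hAdef, le_div_iff₀ (by positivity)]
    have := (le_max_left _ _).trans hQcard
    linarith
  have hqA : q = A * (s₂ * p) := (div_mul_cancel₀ q (by positivity)).symm
  clear_value A q
  have hY : 0 < 2 * Real.exp 1 * M := by positivity
  have hAc : (2 * Real.exp 1 * M) ^ p ≤ A ^ ⌈δ₀⌉₊ :=
    A_bound p _ A δ₀ hY hA2 (by rw [hδ₀]; exact le_max_left _ _)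
  have hC : (2 * p).choose p ≤ 4 ^ p := by
    have := Nat.choose_le_two_pow (2 * p) p
    rwa [pow_mul] at this
  set P : ℕ → ℝ := fun r => ∑ S ∈ Λ₁'.powersetCard r,
    ∏ a ∈ S, (∑ b ∈ S, ((D a ∩ D b).card : ℝ)) with hPdef
  have hP0 : ∀ r, 0 ≤ P r := fun r => by rw [hPdef]; positivity
  have hPle : ∀ r, (r.factorial : ℝ) * P r ≤ (r * q) ^ r := by
    intro r
    have h1 : P r ≤ (r : ℝ) ^ r * ∑ S ∈ Λ₁'.powersetCard r, ∏ a ∈ S, ((D a).card : ℝ) := by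
      rw [hPdef, Finset.mul_sum]
      apply Finset.sum_le_sum
      intro S hS
      have hSr := (mem_powersetCard.1 hS).2
      calc ∏ a ∈ S, (∑ b ∈ S, ((D a ∩ D b).card : ℝ))
          ≤ ∏ a ∈ S, ((r : ℝ) * ((D a).card : ℝ)) := by
            apply Finset.prod_le_prod
            · intro a _; positivity
            · intro a _
              rw [← hSr, ← nsmul_eq_mul]
              apply Finset.sum_le_card_nsmul
              intro b _
              exact_mod_cast card_le_card inter_subset_left
        _ = _ := by rw [Finset.prod_mul_distrib, Finset.prod_const, hSr]
    have h2 := esymm_le (fun a => ((D a).card : ℝ)) (fun _ => Nat.cast_nonneg _) Λ₁' r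
    have h3 : ∑ a ∈ Λ₁', ((D a).card : ℝ) ≤ q := by
      have := sum_card_D_le p (by omega) Λ₁ Λ₂ hdisj hΛ Q D hD Λ₁' hΛ₁'
      rw [hqdef]
      exact_mod_cast this
    calc (r.factorial : ℝ) * P r
        ≤ r.factorial * ((r : ℝ) ^ r * ∑ S ∈ Λ₁'.powersetCard r, ∏ a ∈ S, ((D a).card : ℝ)) := by
          gcongr
      _ = (r : ℝ) ^ r * (r.factorial * ∑ S ∈ Λ₁'.powersetCard r, ∏ a ∈ S, ((D a).card : ℝ)) := by
          ring
      _ ≤ (r : ℝ) ^ r * q ^ r := by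
          have h4 : (∑ a ∈ Λ₁', ((D a).card : ℝ)) ^ r ≤ q ^ r :=
            pow_le_pow_left₀ (by positivity) h3 r
          exact mul_le_mul_of_nonneg_left (h2.trans h4) (by positivity)
      _ = _ := by rw [mul_pow]
  set t : ℕ → ℝ := fun r => ((2 * p).choose p : ℝ) * ((p.factorial : ℝ) *
    ((r : ℝ) ^ p * (((r : ℝ) * s₂) ^ (p - r) * P r))) with htdef
  have hE : (_root_.addEnergy p Q : ℝ) ≤ ∑ r ∈ range (p + 1), t r := by
    have := energy_bound p Λ₁ Λ₂ hdisj hΛ Q hQ D hD Λ₁' hΛ₁'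
    rw [← hs₂] at this
    have h2 : (_root_.addEnergy p Q : ℝ) ≤ _ := Nat.cast_le.2 this
    push_cast at h2
    exact h2
  set m := p - ⌈δ₀⌉₊ with hm
  have hsplit : ∑ r ∈ range (p + 1), t r = ∑ r ∈ range m, t r + ∑ r ∈ Icc m p, t r := by
    rw [Finset.range_eq_Ico, Finset.range_eq_Ico, ← Finset.Ico_add_one_right_eq_Icc,
      Finset.sum_Ico_consecutive _ (Nat.zero_le _) (by omega)]
  have hmain : ∑ r ∈ Icc m p, t r ≤ 2 ^ (5 * p) * X * (p : ℝ) ^ (3 * p) * (s₂ : ℝ) ^ p *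
      ∑ r ∈ Icc m p, (1 / (p * s₂ : ℝ)) ^ r * P r := by
    rw [Finset.mul_sum]
    apply Finset.sum_le_sum
    intro r hr
    exact term_main p r s₂ _ (mem_Icc.1 hr).2 hp0 hs hC X (P r) hX1 (hP0 r)
  have htail : ∑ r ∈ range m, t r ≤ (p : ℝ) ^ (2 * p) * q ^ p / (2 * M ^ p) := by
    have hq0 : 0 < q := by rw [hqA]; positivity
    have h1 : ∀ r ∈ range m, t r ≤
        4 ^ p * (p : ℝ) ^ (2 * p) * q ^ p / ((2 * Real.exp 1 * M) ^ p * 2 ^ m) * 2 ^ r := by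
      intro r hr
      rw [mem_range] at hr
      refine (term_tail p r s₂ _ (by omega) hp0 hs hC q (P r) A (by linarith) hqA
        (hP0 r) (hPle r)).trans ?_
      have h2 : (2 * Real.exp 1 * M) ^ p * 2 ^ (m - r) ≤ A ^ (p - r) := by
        rw [show p - r = ⌈δ₀⌉₊ + (m - r) by omega, pow_add]
        gcongr
      have h3 : (2 : ℝ) ^ m = 2 ^ (m - r) * 2 ^ r := by
        rw [← pow_add]; congr 1; omega
      calc 4 ^ p * (p : ℝ) ^ (2 * p) * q ^ p / A ^ (p - r)
          ≤ 4 ^ p * (p : ℝ) ^ (2 * p) * q ^ p / ((2 * Real.exp 1 * M) ^ p * 2 ^ (m - r)) := by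
            gcongr
        _ = _ := by rw [h3]; field_simp
    refine (Finset.sum_le_sum h1).trans ?_
    rw [← Finset.mul_sum]
    have hg : ∑ r ∈ range m, (2 : ℝ) ^ r ≤ 2 ^ m := by
      rw [geom_sum_eq (by norm_num)]
      norm_num
    calc _ ≤ 4 ^ p * (p : ℝ) ^ (2 * p) * q ^ p / ((2 * Real.exp 1 * M) ^ p * 2 ^ m) * 2 ^ m := by
          gcongr
      _ = ((p : ℝ) ^ (2 * p) * q ^ p / (2 * M ^ p)) * (2 * 4 ^ p / (2 * Real.exp 1) ^ p) := by
          rw [mul_pow (2 * Real.exp 1) M]; field_simp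
      _ ≤ ((p : ℝ) ^ (2 * p) * q ^ p / (2 * M ^ p)) * 1 := by
          gcongr
          rw [div_le_one (by positivity)]
          exact pow_bound p hp
      _ = _ := by ring
  calc (_root_.addEnergy p Q : ℝ) ≤ ∑ r ∈ range (p + 1), t r := hE
    _ = ∑ r ∈ Icc m p, t r + ∑ r ∈ range m, t r := by rw [hsplit, add_comm]
    _ ≤ _ := add_le_add hmain htail
end

section
/- Let K, η > 0 be real numbers with η ∈ (0, 1/2], let p be a positive integer, and let Λ ⊆ F_2^n belong to the family 𝚲(4p). Let Q ⊆ Λ ∔ Λ (sums of two distinct elements of Λ), set K* = max{1, K}, assume p ≥ 2^{30} K*/η and T_p(Q) ≥ p^{2p}|Q|^p/K^p. Suppose in addition p ≤ log|Λ|/log log|Λ| and |Q| ≥ 2^{60 + 2/η} (K*)^{17} p³ |Λ| · max{ (2^{30}(K*)^{11} p)^{ηp} |Λ|^η log|Λ| , exp( log(2^{30}(K*)^{20}) · log((p log K*)/log p) / log(2^{−25} η p/K*) ) }. Then there exist sets 𝓛_1, 𝓛'_1, …, 𝓛_h, 𝓛'_h ⊆ Λ such that 𝓛_i ∩ 𝓛'_j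 = ∅ and 𝓛_i + 𝓛'_i ⊆ Q for all i, j ∈ [h]; |𝓛_i| ≥ log(|Q|/(16(K*)^9 |Λ|)) / (2^{10} log(2^{20} K*)) and |𝓛'_i| ≥ (1/(2^{10} p²)) · (|Q|/((K*)^9 |Λ|))^η for every i; the sumsets 𝓛_i + 𝓛'_i are pairwise disjoint; and |Q ∩ ((𝓛_1 + 𝓛'_1) ⊔ ⋯ ⊔ (𝓛_h + 𝓛'_h))| ≥ |Q|/(16(K*)^9). Here log denotes the logarithm to base 2. -/
open Finset Pointwise

/-- `d ·̇ Λ`: the set of all sums of `d` pairwise distinct elements of `Λ`.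
For `d = 2` this is `Λ ∔ Λ`, the set of sums of two distinct elements of `Λ`. -/
def dDot {G : Type*} [AddCommGroup G] [DecidableEq G] (d : ℕ) (Λ : Finset G) : Finset G :=
  (Λ.powersetCard d).image fun S => ∑ x ∈ S, x

lemma aux_even_count {G : Type*} [AddCommGroup G] [DecidableEq G] (h2 : ∀ x : G, x + x = 0)
    {m : ℕ} {Λ : Finset G} (hΛ : InLambdaFamily m Λ) (l : Multiset G) (hl : ∀ x ∈ l, x ∈ Λ)
    (hc : l.card ≤ m) (hs : l.sum = 0) (x : G) : Even (l.count x) := by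
  by_contra hx
  set S := l.toFinset.filter (fun y => ¬ Even (l.count y)) with hS
  have hxS : x ∈ S := by
    simp only [hS, Finset.mem_filter, Multiset.mem_toFinset]
    refine ⟨?_, hx⟩
    by_contra hn
    rw [Multiset.count_eq_zero_of_notMem hn] at hx
    exact hx (by simp)
  refine hΛ S ?_ ⟨x, hxS⟩ ?_ ?_
  · intro y hy
    simp only [hS, Finset.mem_filter, Multiset.mem_toFinset] at hy
    exact hl y hy.1
  · calc S.card ≤ l.toFinset.card := Finset.card_filter_le _ _
      _ ≤ l.card := Multiset.toFinset_card_le l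
      _ ≤ m := hc
  · rw [← hs, Finset.sum_multiset_count, hS, Finset.sum_filter]
    refine Finset.sum_congr rfl fun y _ => ?_
    by_cases he : Even (l.count y)
    · rw [if_neg (not_not.mpr he)]
      obtain ⟨k, hk⟩ := he
      rw [hk, add_nsmul, h2]
    · rw [if_pos he]
      obtain ⟨k, hk⟩ := Nat.not_even_iff_odd.mp he
      rw [hk, add_nsmul, one_nsmul, mul_comm, mul_nsmul, two_nsmul, h2]
      simp

lemma aux_pair {G : Type*} [AddCommGroup G] [DecidableEq G] (h2 : ∀ x : G, x + x = 0)
    {m : ℕ} (hm : 4 ≤ m) {Λ : Finset G} (hΛ : InLambdaFamily m Λ) {a b c d : G}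
    (ha : a ∈ Λ) (hb : b ∈ Λ) (hc : c ∈ Λ) (hd : d ∈ Λ) (hab : a ≠ b)
    (h : a + b = c + d) : (a = c ∧ b = d) ∨ (a = d ∧ b = c) := by
  have hs : a + (b + (c + d)) = 0 := by rw [← add_assoc, h, h2]
  have key := aux_even_count h2 hΛ (a ::ₘ b ::ₘ c ::ₘ d ::ₘ 0)
    (by simp; exact ⟨ha, hb, hc, hd⟩) (by simpa using hm) (by simpa using hs)
  have e1 : a = c ∨ a = d := by
    by_contra hn
    push Not at hn
    have := key a
    simp [hab, hn.1, hn.2] at this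
  rcases e1 with rfl | rfl
  · left; refine ⟨rfl, ?_⟩; exact add_left_cancel h
  · right; refine ⟨rfl, ?_⟩; rw [add_comm c] at h; exact add_left_cancel h

lemma aux_repr {G : Type*} [AddCommGroup G] [DecidableEq G] 
    {Λ Q : Finset G} (hQ : Q ⊆ dDot 2 Λ) {q : G} (hq : q ∈ Q) :
    ∃ a ∈ Λ, ∃ b ∈ Λ, a ≠ b ∧ a + b = q := by
  have := hQ hq
  simp only [dDot, Finset.mem_image, Finset.mem_powersetCard] at this
  obtain ⟨S, ⟨hS, hc⟩, rfl⟩ := this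
  obtain ⟨a, b, hab, rfl⟩ := Finset.card_eq_two.mp hc
  exact ⟨a, hS (by simp), b, hS (by simp), hab, by rw [Finset.sum_pair hab]⟩

/-- tuples of elements of `Q` with given sum -/
def tupSet {G : Type*} [AddCommGroup G] [DecidableEq G] (Q : Finset G) (m : ℕ) (g : G) :
    Finset (Fin m → G) :=
  (Fintype.piFinset fun _ : Fin m => Q).filter fun v => ∑ i, v i = g

lemma mem_tupSet {G : Type*} [AddCommGroup G] [DecidableEq G] {Q : Finset G} {m : ℕ} {g : G}
    {v : Fin m → G} : v ∈ tupSet Q m g ↔ (∀ i, v i ∈ Q) ∧ ∑ i, v i = g := by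
  simp [tupSet]

lemma addEnergy_le {G : Type*} [AddCommGroup G] [DecidableEq G] (h2 : ∀ x : G, x + x = 0)
    (Q : Finset G) (p : ℕ) : _root_.addEnergy p Q ≤ (tupSet Q (2 * p) 0).card := by
  rw [two_mul]
  unfold _root_.addEnergy
  refine Finset.card_le_card_of_injOn (fun v => Fin.append v.1 v.2) ?_ ?_
  · rintro ⟨v, w⟩ hv
    simp only [Finset.coe_filter, Finset.mem_product, Fintype.mem_piFinset, Set.mem_ofPred_eq] at hv
    simp only [Finset.mem_coe, mem_tupSet]
    constructor
    · intro i
      refine Fin.addCases (fun i => ?_) (fun i => ?_) i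
      · simpa using hv.1.1 i
      · rw [Fin.append_right]; exact hv.1.2 i
    · rw [Fin.sum_univ_add]
      simp only [Fin.append_left, Fin.append_right]
      rw [hv.2, h2]
  · rintro ⟨v, w⟩ _ ⟨v', w'⟩ _ h
    simp only at h
    ext i
    · have := congrFun h (Fin.castAdd p i); simpa using this
    · have := congrFun h (Fin.natAdd p i); rwa [Fin.append_right, Fin.append_right] at this

/-- neighbours -/
def nb {G : Type*} [AddCommGroup G] [DecidableEq G] (Λ Q : Finset G) (a : G) : Finset G :=
  Λ.filter fun b => a + b ∈ Q

lemma exists_edge {G : Type*} [AddCommGroup G] [DecidableEq G] (h2 : ∀ x : G, x + x = 0)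
    {M : ℕ} {Λ Q : Finset G} (hΛ : InLambdaFamily M Λ) (hQ : Q ⊆ dDot 2 Λ) {a b : G}
    (ha : a ∈ Λ) (hb : b ∈ Λ) (hab : a ≠ b) {m : ℕ} (hm : 2 * m + 2 ≤ M) {v : Fin m → G}
    (hv : v ∈ tupSet Q m (a + b)) : ∃ j, ∃ a' ∈ nb Λ Q a, v j = a + a' := by
  rw [mem_tupSet] at hv
  obtain ⟨hvQ, hvs⟩ := hv
  have hr := fun i => aux_repr hQ (hvQ i)
  choose x hx y hy hxy hxyv using hr
  by_contra hn
  push Not at hn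
  have hax : ∀ i, a ≠ x i := by
    rintro i rfl
    refine hn i (y i) ?_ (hxyv i).symm
    simp only [nb, Finset.mem_filter]
    exact ⟨hy i, by rw [hxyv]; exact hvQ i⟩
  have hay : ∀ i, a ≠ y i := by
    rintro i rfl
    refine hn i (x i) ?_ (by rw [← hxyv i, add_comm])
    simp only [nb, Finset.mem_filter]
    exact ⟨hx i, by rw [add_comm, hxyv]; exact hvQ i⟩
  have key := aux_even_count h2 hΛ
    (a ::ₘ b ::ₘ (Finset.univ.val.map x + Finset.univ.val.map y))
    (by
      intro z hz
      simp only [Multiset.mem_cons, Multiset.mem_add, Multiset.mem_map] at hz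
      rcases hz with rfl | rfl | ⟨i, _, rfl⟩ | ⟨i, _, rfl⟩
      exacts [ha, hb, hx i, hy i])
    (by simp; omega)
    (by
      have : (Finset.univ.val.map x).sum + (Finset.univ.val.map y).sum = a + b := by
        rw [← hvs]
        change ∑ i, x i + ∑ i, y i = _
        rw [← Finset.sum_add_distrib]
        exact Finset.sum_congr rfl fun i _ => hxyv i
      rw [Multiset.sum_cons, Multiset.sum_cons, Multiset.sum_add, this, ← add_assoc, h2]) a
  have c1 : (Finset.univ.val.map x).count a = 0 := by
    rw [Multiset.count_eq_zero]; simp; exact fun i h => hax i h.symm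
  have c2 : (Finset.univ.val.map y).count a = 0 := by
    rw [Multiset.count_eq_zero]; simp; exact fun i h => hay i h.symm
  rw [Multiset.count_cons_self, Multiset.count_cons_of_ne hab, Multiset.count_add, c1, c2] at key
  simp at key

lemma tup_rec {G : Type*} [AddCommGroup G] [DecidableEq G] (h2 : ∀ x : G, x + x = 0)
    {M : ℕ} {Λ Q : Finset G} (hΛ : InLambdaFamily M Λ) (hQ : Q ⊆ dDot 2 Λ) {a b : G}
    (ha : a ∈ Λ) (hb : b ∈ Λ) (hab : a ≠ b) {m : ℕ} (hm : 2 * (m + 1) + 2 ≤ M) :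
    (tupSet Q (m + 1) (a + b)).card ≤
      (m + 1) * ∑ a' ∈ nb Λ Q a, (tupSet Q m (a' + b)).card := by
  have hsub : tupSet Q (m + 1) (a + b) ⊆ (Finset.univ : Finset (Fin (m + 1))).biUnion fun j =>
      (nb Λ Q a).biUnion fun a' => (tupSet Q m (a' + b)).image fun w =>
        (Fin.insertNth j (a + a') w : Fin (m + 1) → G) := by
    intro v hv
    obtain ⟨j, a', ha', hj⟩ := exists_edge h2 hΛ hQ ha hb hab hm hv
    simp only [Finset.mem_biUnion, Finset.mem_image, Finset.mem_univ, true_and]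
    rw [mem_tupSet] at hv
    refine ⟨j, a', ha', j.removeNth v, ?_, ?_⟩
    · rw [mem_tupSet]
      refine ⟨fun i => hv.1 _, ?_⟩
      have hs := hv.2
      rw [Fin.sum_univ_succAbove _ j, hj] at hs
      have : ∑ i, v (j.succAbove i) = a' + b := by
        have h3 : a' + (a + a' + ∑ i, v (j.succAbove i)) = a' + (a + b) := by rw [hs]
        have h4 : a + ((a' + a') + ∑ i, v (j.succAbove i)) = a + (a' + b) := by
          convert h3 using 1 <;> abel
        rw [h2, zero_add] at h4
        exact add_left_cancel h4
      exact this
    · rw [← hj]; exact Fin.insertNth_self_removeNth j v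
  calc _ ≤ _ := Finset.card_le_card hsub
    _ ≤ ∑ _j : Fin (m + 1), ∑ a' ∈ nb Λ Q a, (tupSet Q m (a' + b)).card := by
      refine Finset.card_biUnion_le.trans (Finset.sum_le_sum fun j _ => ?_)
      refine Finset.card_biUnion_le.trans (Finset.sum_le_sum fun a' _ => ?_)
      exact Finset.card_image_le
    _ = _ := by simp

lemma tup_zero {G : Type*} [AddCommGroup G] [DecidableEq G] (h2 : ∀ x : G, x + x = 0)
    {Λ Q : Finset G} (hQ : Q ⊆ dDot 2 Λ) (m : ℕ) :
    (tupSet Q (m + 1) 0).card ≤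
      ∑ a ∈ Λ, ∑ b ∈ nb Λ Q a, (tupSet Q m (b + a)).card := by
  have hsub : tupSet Q (m + 1) 0 ⊆ Λ.biUnion fun a =>
      (nb Λ Q a).biUnion fun b => (tupSet Q m (b + a)).image fun w =>
        (Fin.cons (b + a) w : Fin (m + 1) → G) := by
    intro v hv
    rw [mem_tupSet] at hv
    obtain ⟨a, ha, b, hb, hab, hq⟩ := aux_repr hQ (hv.1 0)
    simp only [Finset.mem_biUnion, Finset.mem_image]
    refine ⟨a, ha, b, ?_, Fin.tail v, ?_, ?_⟩
    · simp only [nb, Finset.mem_filter]; exact ⟨hb, by rw [hq]; exact hv.1 0⟩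
    · rw [mem_tupSet]
      refine ⟨fun i => hv.1 _, ?_⟩
      have hs := hv.2
      rw [Fin.sum_univ_succ, ← hq] at hs
      have h5 : (a + b) + ∑ i : Fin m, v i.succ = (a + b) + (a + b) := by rw [hs, h2]
      rw [add_comm b a]
      exact add_left_cancel h5
    · rw [add_comm b a, hq]; exact Fin.cons_self_tail v
  calc _ ≤ _ := Finset.card_le_card hsub
    _ ≤ _ := by
      refine Finset.card_biUnion_le.trans (Finset.sum_le_sum fun j _ => ?_)
      refine Finset.card_biUnion_le.trans (Finset.sum_le_sum fun a' _ => ?_)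
      exact Finset.card_image_le

/-- adjacency matrix -/
noncomputable def adjM {G : Type*} [AddCommGroup G] [DecidableEq G] (Λ Q : Finset G) :
    Matrix G G ℝ := fun a b => if a ∈ Λ ∧ b ∈ Λ ∧ a + b ∈ Q then 1 else 0

/-- normalized counts -/
noncomputable def wt {G : Type*} [AddCommGroup G] [DecidableEq G] (Q : Finset G) (m : ℕ) : ℝ :=
  ((tupSet Q m 0).card : ℝ) / (m.factorial : ℝ)

lemma wt_nonneg {G : Type*} [AddCommGroup G] [DecidableEq G] (Q : Finset G) (m : ℕ) :
    0 ≤ wt Q m := by unfold wt; positivity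

lemma adjM_nonneg {G : Type*} [AddCommGroup G] [DecidableEq G] (Λ Q : Finset G) (a b : G) :
    0 ≤ adjM Λ Q a b := by unfold adjM; split_ifs <;> norm_num

lemma adjM_pow_nonneg {G : Type*} [AddCommGroup G] [DecidableEq G] [Fintype G]
    (Λ Q : Finset G) (j : ℕ) (a b : G) :
    0 ≤ (adjM Λ Q ^ j) a b := by
  induction j generalizing a b with
  | zero => rw [pow_zero, Matrix.one_apply]; split_ifs <;> norm_num
  | succ j ih =>
    rw [pow_succ, Matrix.mul_apply]
    exact Finset.sum_nonneg fun i _ => mul_nonneg (ih _ _) (adjM_nonneg _ _ _ _)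

lemma sum_nb {G : Type*} [AddCommGroup G] [DecidableEq G] [Fintype G]
    {Λ Q : Finset G} {a : G} (ha : a ∈ Λ) (f : G → ℝ) :
    ∑ b ∈ nb Λ Q a, f b = ∑ b, adjM Λ Q a b * f b := by
  unfold nb adjM
  rw [Finset.sum_filter, ← Finset.sum_subset (Finset.subset_univ Λ)]
  · refine Finset.sum_congr rfl fun b hb => ?_
    by_cases h : a + b ∈ Q <;> simp [ha, hb, h]
  · intro b _ hb
    simp [hb]

lemma tup_bound {G : Type*} [AddCommGroup G] [DecidableEq G] [Fintype G]
    (h2 : ∀ x : G, x + x = 0)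
    {M : ℕ} {Λ Q : Finset G} (hΛ : InLambdaFamily M Λ) (hQ : Q ⊆ dDot 2 Λ) (m : ℕ)
    (hm : 2 * m + 2 ≤ M) {a b : G} (ha : a ∈ Λ) (hb : b ∈ Λ) :
    ((tupSet Q m (a + b)).card : ℝ) / (m.factorial : ℝ) ≤
      ∑ j ∈ Finset.range (m + 1), wt Q (m - j) * (adjM Λ Q ^ j) a b := by
  induction m generalizing a b with
  | zero =>
    by_cases hab : a = b
    · subst hab
      simp [h2, wt]
    · have : tupSet Q 0 (a + b) = ∅ := by
        rw [Finset.eq_empty_iff_forall_notMem]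
        intro v hv
        rw [mem_tupSet] at hv
        have h0 := hv.2
        simp only [Finset.univ_eq_empty, Finset.sum_empty] at h0
        apply hab
        have : a + b = b + b := by rw [← h0, h2]
        exact add_right_cancel this
      rw [this]
      simp [hab]
  | succ m ih =>
    by_cases hab : a = b
    · subst hab
      rw [Finset.sum_range_succ']
      have : 0 ≤ ∑ j ∈ Finset.range (m + 1), wt Q (m + 1 - (j + 1)) * (adjM Λ Q ^ (j + 1)) a a :=
        Finset.sum_nonneg fun j _ => mul_nonneg (wt_nonneg _ _) (adjM_pow_nonneg _ _ _ _ _)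
      simp only [h2, pow_zero, Matrix.one_apply_eq, mul_one, Nat.sub_zero]
      have h3 : wt Q (m + 1) = ((tupSet Q (m + 1) 0).card : ℝ) / ((m + 1).factorial : ℝ) := rfl
      linarith
    · have h1 := tup_rec h2 hΛ hQ ha hb hab hm
      have h1' : ((tupSet Q (m + 1) (a + b)).card : ℝ) ≤
        (m + 1) * ∑ a' ∈ nb Λ Q a, ((tupSet Q m (a' + b)).card : ℝ) := by exact_mod_cast h1
      have hf : (0 : ℝ) < m.factorial := by exact_mod_cast m.factorial_pos
      calc ((tupSet Q (m + 1) (a + b)).card : ℝ) / ((m + 1).factorial : ℝ)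
          ≤ ((m + 1) * ∑ a' ∈ nb Λ Q a, ((tupSet Q m (a' + b)).card : ℝ)) /
            ((m + 1).factorial : ℝ) := by gcongr
        _ = ∑ a' ∈ nb Λ Q a, ((tupSet Q m (a' + b)).card : ℝ) / m.factorial := by
          rw [Nat.factorial_succ, ← Finset.sum_div]
          push_cast
          field_simp
        _ ≤ ∑ a' ∈ nb Λ Q a, ∑ j ∈ Finset.range (m + 1),
              wt Q (m - j) * (adjM Λ Q ^ j) a' b := by
          refine Finset.sum_le_sum fun a' ha' => ih (by omega) ?_ hb
          exact (Finset.mem_filter.mp ha').1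
        _ = ∑ j ∈ Finset.range (m + 1), wt Q (m - j) * (adjM Λ Q ^ (j + 1)) a b := by
          rw [Finset.sum_comm]
          refine Finset.sum_congr rfl fun j _ => ?_
          rw [← Finset.mul_sum, sum_nb ha, pow_succ', Matrix.mul_apply]
        _ ≤ _ := by
          rw [Finset.sum_range_succ' _ (m + 1)]
          have h4 : 0 ≤ wt Q (m + 1 - 0) * (adjM Λ Q ^ 0) a b :=
            mul_nonneg (wt_nonneg _ _) (adjM_pow_nonneg _ _ _ _ _)
          simp only [Nat.add_sub_add_right]
          linarith

lemma wt_rec {G : Type*} [AddCommGroup G] [DecidableEq G] [Fintype G]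
    (h2 : ∀ x : G, x + x = 0)
    {M : ℕ} {Λ Q : Finset G} (hΛ : InLambdaFamily M Λ) (hQ : Q ⊆ dDot 2 Λ) (m : ℕ)
    (hm : 2 * m + 2 ≤ M) :
    ((m : ℝ) + 1) * wt Q (m + 1) ≤
      ∑ j ∈ Finset.range (m + 1), wt Q (m - j) * (adjM Λ Q ^ (j + 1)).trace := by
  have h1 := tup_zero h2 hQ m
  have h1' : ((tupSet Q (m + 1) 0).card : ℝ) ≤
      ∑ a ∈ Λ, ∑ b ∈ nb Λ Q a, ((tupSet Q m (b + a)).card : ℝ) := by exact_mod_cast h1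
  have hf : (0 : ℝ) < m.factorial := by exact_mod_cast m.factorial_pos
  calc ((m : ℝ) + 1) * wt Q (m + 1) = ((tupSet Q (m + 1) 0).card : ℝ) / m.factorial := by
        unfold wt; rw [Nat.factorial_succ]; push_cast; field_simp
    _ ≤ (∑ a ∈ Λ, ∑ b ∈ nb Λ Q a, ((tupSet Q m (b + a)).card : ℝ)) / m.factorial := by gcongr
    _ = ∑ a ∈ Λ, ∑ b ∈ nb Λ Q a, ((tupSet Q m (b + a)).card : ℝ) / m.factorial := by
      simp only [Finset.sum_div]
    _ ≤ ∑ a ∈ Λ, ∑ b ∈ nb Λ Q a, ∑ j ∈ Finset.range (m + 1),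
              wt Q (m - j) * (adjM Λ Q ^ j) b a := by
      refine Finset.sum_le_sum fun a ha => Finset.sum_le_sum fun b hb => ?_
      exact tup_bound h2 hΛ hQ m hm (Finset.mem_filter.mp hb).1 ha
    _ = ∑ a ∈ Λ, ∑ j ∈ Finset.range (m + 1), wt Q (m - j) * (adjM Λ Q ^ (j + 1)) a a := by
      refine Finset.sum_congr rfl fun a ha => ?_
      rw [Finset.sum_comm]
      refine Finset.sum_congr rfl fun j _ => ?_
      rw [← Finset.mul_sum, sum_nb ha, pow_succ', Matrix.mul_apply]
    _ ≤ ∑ a, ∑ j ∈ Finset.range (m + 1), wt Q (m - j) * (adjM Λ Q ^ (j + 1)) a a := by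
      refine Finset.sum_le_sum_of_subset_of_nonneg (Finset.subset_univ _) fun a _ _ => ?_
      exact Finset.sum_nonneg fun j _ => mul_nonneg (wt_nonneg _ _) (adjM_pow_nonneg _ _ _ _ _)
    _ = _ := by
      rw [Finset.sum_comm]
      refine Finset.sum_congr rfl fun j _ => ?_
      rw [← Finset.mul_sum]; rfl

lemma choose_ineq (s m : ℕ) :
    (s : ℝ) * ∑ j ∈ Finset.range m, ((j + s).choose s : ℝ) ≤ m * ((m + s).choose s : ℝ) := by
  induction m with
  | zero => simp
  | succ m ih =>
    rw [Finset.sum_range_succ, mul_add]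
    have h : ((m + 1 : ℕ) : ℝ) * ((m + 1 + s).choose s : ℝ) = (m + s + 1) * ((m + s).choose s : ℝ) := by
      have := Nat.add_one_mul_choose_eq (m + s) m
      have e1 : (m + s).choose m = (m + s).choose s := Nat.choose_symm_add
      have e2 : (m + s + 1).choose (m + 1) = (m + 1 + s).choose s := by
        rw [show m + s + 1 = (m + 1) + s by ring]; exact Nat.choose_symm_add
      rw [e1, e2] at this
      have h5 : ((m + s + 1 : ℕ) : ℝ) * ((m + s).choose s : ℝ) =
        ((m + 1 + s).choose s : ℝ) * ((m + 1 : ℕ) : ℝ) := by exact_mod_cast this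
      push_cast at h5 ⊢
      linarith
    rw [h]
    have : (0 : ℝ) ≤ ((m + s).choose s : ℝ) := by positivity
    nlinarith

lemma wt_bound (w c : ℕ → ℝ) (M s : ℕ) (ρ : ℝ) (hρ : 0 ≤ ρ) (hw0 : w 0 ≤ 1)
    (hw : ∀ m, 0 ≤ w m)
    (hc : ∀ k, c (k + 1) ≤ s * ρ ^ (k + 1))
    (hrec : ∀ m, m + 1 ≤ M → ((m : ℝ) + 1) * w (m + 1) ≤
      ∑ j ∈ Finset.range (m + 1), w (m - j) * c (j + 1)) (m : ℕ) (hm : m ≤ M) :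
    w m ≤ ((m + s).choose s : ℝ) * ρ ^ m := by
  induction m using Nat.strong_induction_on with
  | _ m ih =>
  rcases m with _ | m
  · simpa using hw0
  have h1 := hrec m hm
  have h2 : ∑ j ∈ Finset.range (m + 1), w (m - j) * c (j + 1) ≤
      ((m : ℝ) + 1) * (((m + 1 + s).choose s : ℝ) * ρ ^ (m + 1)) := by
    calc _ ≤ ∑ j ∈ Finset.range (m + 1), (((m - j + s).choose s : ℝ) * ρ ^ (m - j)) *
          (s * ρ ^ (j + 1)) := by
            refine Finset.sum_le_sum fun j hj => ?_
            have := Finset.mem_range.mp hj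
            refine (mul_le_mul_of_nonneg_left (hc j) (hw _)).trans ?_
            exact mul_le_mul_of_nonneg_right (ih (m - j) (by omega) (by omega)) (by positivity)
      _ = ρ ^ (m + 1) * (s * ∑ j ∈ Finset.range (m + 1), ((m - j + s).choose s : ℝ)) := by
        rw [Finset.mul_sum, Finset.mul_sum]
        refine Finset.sum_congr rfl fun j hj => ?_
        have := Finset.mem_range.mp hj
        have e : ρ ^ (m + 1) = ρ ^ (m - j) * ρ ^ (j + 1) := by
          rw [← pow_add]; congr 1; omega
        rw [e]
        ring
      _ = ρ ^ (m + 1) * (s * ∑ j ∈ Finset.range (m + 1), ((j + s).choose s : ℝ)) := by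
        congr 2
        have := Finset.sum_range_reflect (fun j => ((j + s).choose s : ℝ)) (m + 1)
        simpa using this
      _ ≤ _ := by
        have := choose_ineq s (m + 1)
        push_cast at this
        have h6 := mul_le_mul_of_nonneg_left this (pow_nonneg hρ (m + 1))
        linarith
  have h3 := h1.trans h2
  exact le_of_mul_le_mul_left h3 (by positivity)

/-- squared Frobenius norm -/
def fro {V : Type*} [Fintype V] (M : Matrix V V ℝ) : ℝ := ∑ a, ∑ b, M a b ^ 2

lemma fro_nonneg {V : Type*} [Fintype V] (M : Matrix V V ℝ) : 0 ≤ fro M :=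
  Finset.sum_nonneg fun _ _ => Finset.sum_nonneg fun _ _ => sq_nonneg _

lemma trace_mul_sq {V : Type*} [Fintype V] (M N : Matrix V V ℝ) :
    (M * N).trace ^ 2 ≤ fro M * fro N := by
  have h1 : (M * N).trace = ∑ x : V × V, M x.1 x.2 * N x.2 x.1 := by
    rw [Fintype.sum_prod_type]
    simp [Matrix.trace, Matrix.mul_apply]
  have h2 : fro M = ∑ x : V × V, M x.1 x.2 ^ 2 := by
    rw [Fintype.sum_prod_type]; rfl
  have h3 : fro N = ∑ x : V × V, N x.2 x.1 ^ 2 := by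
    rw [Fintype.sum_prod_type, Finset.sum_comm]; rfl
  rw [h1, h2, h3]
  exact Finset.sum_mul_sq_le_sq_mul_sq _ _ _

lemma fro_mul {V : Type*} [Fintype V] (M N : Matrix V V ℝ) : fro (M * N) ≤ fro M * fro N := by
  calc fro (M * N) ≤ ∑ a, ∑ b, (∑ c, M a c ^ 2) * (∑ c, N c b ^ 2) := by
        refine Finset.sum_le_sum fun a _ => Finset.sum_le_sum fun b _ => ?_
        rw [Matrix.mul_apply]
        exact Finset.sum_mul_sq_le_sq_mul_sq _ _ _
    _ = fro M * fro N := by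
      unfold fro
      rw [Finset.sum_comm (s := Finset.univ) (f := fun a b => N a b ^ 2), Finset.sum_mul_sum]

lemma fro_eq_trace {V : Type*} [Fintype V] (M : Matrix V V ℝ) (hM : M.transpose = M) :
    fro M = (M * M).trace := by
  simp only [fro, Matrix.trace, Matrix.diag, Matrix.mul_apply]
  refine Finset.sum_congr rfl fun a _ => Finset.sum_congr rfl fun b _ => ?_
  rw [sq]; congr 1
  exact congrFun (congrFun hM b) a

lemma fro_pow {V : Type*} [Fintype V] [DecidableEq V] (A : Matrix V V ℝ) (hA : A.transpose = A)
    (ρ : ℝ) (hρ : 0 ≤ ρ) (h : fro (A ^ 2) ≤ ρ ^ 4) (j : ℕ) :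
    fro (A ^ (j + 2)) ≤ ρ ^ (2 * (j + 2)) := by
  induction j using Nat.strong_induction_on with
  | _ j ih =>
  rcases j with _ | _ | j
  · simpa using h
  · have h4 : fro (A ^ 4) ≤ ρ ^ 8 := by
      have := fro_mul (A ^ 2) (A ^ 2)
      rw [← pow_add] at this
      calc _ ≤ _ := this
        _ ≤ ρ ^ 4 * ρ ^ 4 := mul_le_mul h h (fro_nonneg _) (by positivity)
        _ = _ := by ring
    have h5 : fro (A ^ 3) = (A ^ 2 * A ^ 4).trace := by
      rw [fro_eq_trace _ (by rw [Matrix.transpose_pow, hA]), ← pow_add, ← pow_add]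
    have h6 := trace_mul_sq (A ^ 2) (A ^ 4)
    rw [← h5] at h6
    have h7 : fro (A ^ 3) ^ 2 ≤ (ρ ^ 6) ^ 2 := by
      calc _ ≤ _ := h6
        _ ≤ ρ ^ 4 * ρ ^ 8 := mul_le_mul h h4 (fro_nonneg _) (by positivity)
        _ = _ := by ring
    exact (abs_le_of_sq_le_sq' h7 (by positivity)).2
  · have h1 := ih j (by omega)
    have := fro_mul (A ^ 2) (A ^ (j + 2))
    rw [← pow_add] at this
    rw [show j + 1 + 1 + 2 = 2 + (j + 2) by ring]
    calc _ ≤ _ := this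
        _ ≤ ρ ^ 4 * ρ ^ (2 * (j + 2)) := mul_le_mul h h1 (fro_nonneg _) (by positivity)
        _ = _ := by rw [← pow_add]; congr 1; ring

lemma trace_bound {V : Type*} [Fintype V] [DecidableEq V] (A : Matrix V V ℝ)
    (hA : A.transpose = A) (hd : A.trace = 0)
    (ρ : ℝ) (hρ : 0 ≤ ρ) (h : fro (A ^ 2) ≤ ρ ^ 4) (s : ℝ) (hs : 1 ≤ s)
    (h1 : fro A ≤ s * ρ ^ 2) (k : ℕ) :
    (A ^ (k + 1)).trace ≤ s * ρ ^ (k + 1) := by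
  rcases k with _ | _ | _ | k
  · simp [hd]; positivity
  · have := fro_eq_trace A hA
    rw [show (0 + 1 + 1) = 2 by rfl, pow_two A, ← this]; exact h1
  · have h6 := trace_mul_sq A (A ^ 2)
    rw [← pow_succ'] at h6
    have h7 : (A ^ 3).trace ^ 2 ≤ (s * ρ ^ 3) ^ 2 := by
      calc _ ≤ _ := h6
        _ ≤ s * ρ ^ 2 * ρ ^ 4 := mul_le_mul h1 h (fro_nonneg _) (by positivity)
        _ = s * ρ ^ 6 := by ring
        _ ≤ (s * s) * ρ ^ 6 := by
          apply mul_le_mul_of_nonneg_right _ (by positivity)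
          nlinarith
        _ = _ := by ring
    exact (abs_le_of_sq_le_sq' h7 (by positivity)).2
  · have h6 := trace_mul_sq (A ^ 2) (A ^ (k + 2))
    rw [← pow_add] at h6
    rw [show k + 1 + 1 + 1 + 1 = 2 + (k + 2) by ring]
    have h7 : (A ^ (2 + (k + 2))).trace ^ 2 ≤ (ρ ^ (2 + (k + 2))) ^ 2 := by
      calc _ ≤ _ := h6
        _ ≤ ρ ^ 4 * ρ ^ (2 * (k + 2)) :=
          mul_le_mul h (fro_pow A hA ρ hρ h k) (fro_nonneg _) (by positivity)
        _ = _ := by rw [← pow_add, ← pow_mul]; congr 1; ring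
    have h8 := (abs_le_of_sq_le_sq' h7 (by positivity)).2
    have h9 : 0 ≤ ρ ^ (2 + (k + 2)) := by positivity
    nlinarith

lemma adjM_symm {G : Type*} [AddCommGroup G] [DecidableEq G] (Λ Q : Finset G) :
    (adjM Λ Q).transpose = adjM Λ Q := by
  ext a b
  simp only [Matrix.transpose_apply, adjM, add_comm b a]
  congr 1
  simp only [eq_iff_iff]; tauto

lemma zero_notMem {G : Type*} [AddCommGroup G] [DecidableEq G] (h2 : ∀ x : G, x + x = 0)
    {Λ Q : Finset G} (hQ : Q ⊆ dDot 2 Λ) : (0 : G) ∉ Q := by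
  intro h
  obtain ⟨a, _, b, _, hab, h0⟩ := aux_repr hQ h
  apply hab
  have : a + b = b + b := by rw [h0, h2]
  exact add_right_cancel this

lemma adjM_diag {G : Type*} [AddCommGroup G] [DecidableEq G] (h2 : ∀ x : G, x + x = 0)
    {Λ Q : Finset G} (hQ : Q ⊆ dDot 2 Λ) (a : G) : adjM Λ Q a a = 0 := by
  simp [adjM, h2, zero_notMem h2 hQ]

lemma adjM_sq {G : Type*} [AddCommGroup G] [DecidableEq G] (Λ Q : Finset G) (a b : G) :
    adjM Λ Q a b ^ 2 = adjM Λ Q a b := by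
  unfold adjM; split_ifs <;> norm_num

lemma adjM_sum {G : Type*} [AddCommGroup G] [DecidableEq G] [Fintype G]
    (h2 : ∀ x : G, x + x = 0)
    {M : ℕ} (hM : 4 ≤ M) {Λ Q : Finset G} (hΛ : InLambdaFamily M Λ) (hQ : Q ⊆ dDot 2 Λ) :
    ∑ a, ∑ b, adjM Λ Q a b ≤ 2 * Q.card := by
  have h1 : ∑ a, ∑ b, adjM Λ Q a b =
      (((Finset.univ : Finset (G × G)).filter
        fun x => x.1 ∈ Λ ∧ x.2 ∈ Λ ∧ x.1 + x.2 ∈ Q).card : ℝ) := by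
    rw [← Fintype.sum_prod_type' (f := fun a b => adjM Λ Q a b)]
    simp [adjM]
  rw [h1]
  have h3 : ((Finset.univ : Finset (G × G)).filter
        fun x => x.1 ∈ Λ ∧ x.2 ∈ Λ ∧ x.1 + x.2 ∈ Q).card ≤ 2 * Q.card := by
    refine Finset.card_le_mul_card_image_of_maps_to (f := fun x => x.1 + x.2) ?_ 2 ?_
    · intro x hx; simp at hx; exact hx.2.2
    · intro q hq
      obtain ⟨a, ha, b, hb, hab, rfl⟩ := aux_repr hQ hq
      refine (Finset.card_le_card (t := {(a, b), (b, a)}) ?_).trans Finset.card_le_two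
      rintro ⟨c, d⟩ hx
      simp only [Finset.mem_filter, Finset.mem_univ, true_and] at hx
      rcases aux_pair h2 hM hΛ ha hb hx.1.1 hx.1.2.1 hab hx.2.symm with ⟨rfl, rfl⟩ | ⟨rfl, rfl⟩
      · simp
      · simp
  exact_mod_cast h3

lemma fact_exp (n : ℕ) : ((n + 1).factorial : ℝ) * Real.exp 1 ^ n ≤ ((n : ℝ) + 1) ^ (n + 2) := by
  induction n with
  | zero => simp
  | succ n ih =>
    have h : Real.exp 1 * ((n : ℝ) + 1) ^ (n + 2) ≤ ((n : ℝ) + 2) ^ (n + 2) := by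
      have h1 : Real.exp (1 / ((n : ℝ) + 2)) ≤ ((n : ℝ) + 2) / (n + 1) := by
        have := Real.one_sub_le_exp_neg (1 / ((n : ℝ) + 2))
        rw [Real.exp_neg] at this
        have h3 : (1 : ℝ) - 1 / (n + 2) = (n + 1) / (n + 2) := by field_simp; ring
        rw [h3] at this
        have h4 : (0 : ℝ) < (n + 1) / (n + 2) := by positivity
        have := inv_anti₀ h4 this
        rwa [inv_inv, inv_div] at this
      have h2 : Real.exp 1 ≤ (((n : ℝ) + 2) / (n + 1)) ^ (n + 2) := by
        calc Real.exp 1 = Real.exp (1 / ((n : ℝ) + 2)) ^ (n + 2) := by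
              rw [← Real.exp_nat_mul]; congr 1; push_cast; field_simp
          _ ≤ _ := by gcongr
      rw [div_pow, le_div_iff₀ (by positivity)] at h2
      exact h2
    rw [Nat.factorial_succ, pow_succ]
    push_cast
    calc ((n : ℝ) + 1 + 1) * ((n + 1).factorial : ℝ) * (Real.exp 1 ^ n * Real.exp 1)
        = (n + 2) * Real.exp 1 * (((n + 1).factorial : ℝ) * Real.exp 1 ^ n) := by ring
      _ ≤ (n + 2) * Real.exp 1 * (((n : ℝ) + 1) ^ (n + 2)) := by gcongr
      _ = (n + 2) * (Real.exp 1 * (((n : ℝ) + 1) ^ (n + 2))) := by ring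
      _ ≤ (n + 2) * (((n : ℝ) + 2) ^ (n + 2)) := by gcongr
      _ = _ := by ring

lemma numeric_fact (p s : ℕ) (hp : 2 ^ 31 ≤ p) (hs : s * 2 ^ 29 ≤ p) :
    ((2 * p).factorial : ℝ) * ((2 * p + s).choose s : ℝ) < (p : ℝ) ^ (2 * p) := by
  have hp' : (2 : ℝ) ^ 31 ≤ p := by exact_mod_cast hp
  have hs' : (s : ℝ) * 2 ^ 29 ≤ p := by exact_mod_cast hs
  have hp0 : (0 : ℝ) < p := by linarith [show (0 : ℝ) < 2 ^ 31 by norm_num]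
  have hC : ((2 * p + s).choose s : ℝ) ≤ Real.exp (p / 256) := by
    have h1 : ((2 * p + s).choose s : ℝ) * (1 / 1024) ^ s ≤ (1 / 1024 + 1) ^ (2 * p + s) := by
      rw [add_pow]
      have := Finset.single_le_sum (f := fun m => (1 / 1024 : ℝ) ^ m * 1 ^ (2 * p + s - m) *
        ((2 * p + s).choose m : ℝ)) (s := Finset.range (2 * p + s + 1)) (a := s)
        (fun i _ => by positivity) (by simp)
      simp only [one_pow, mul_one] at this ⊢
      linarith
    have h2 : (1 / 1024 + 1 : ℝ) ^ (2 * p + s) ≤ Real.exp ((2 * p + s) / 1024) := by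
      calc _ ≤ Real.exp (1 / 1024) ^ (2 * p + s) := by
            gcongr; exact Real.add_one_le_exp _
        _ = _ := by rw [← Real.exp_nat_mul]; congr 1; push_cast; ring
    have h3 : (1024 : ℝ) ^ s ≤ Real.exp (10 * s) := by
      calc (1024 : ℝ) ^ s ≤ (Real.exp 10) ^ s := by
            gcongr
            have : (2 : ℝ) ≤ Real.exp 1 := by linarith [Real.add_one_le_exp (1 : ℝ)]
            calc (1024 : ℝ) = 2 ^ 10 := by norm_num
              _ ≤ Real.exp 1 ^ 10 := by gcongr
              _ = _ := by rw [← Real.exp_nat_mul]; norm_num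
        _ = _ := by rw [← Real.exp_nat_mul]; congr 1; ring
    calc ((2 * p + s).choose s : ℝ) = ((2 * p + s).choose s : ℝ) * (1 / 1024) ^ s * 1024 ^ s := by
          rw [mul_assoc, ← mul_pow]; norm_num
      _ ≤ Real.exp ((2 * p + s) / 1024) * Real.exp (10 * s) := by
          gcongr; exact h1.trans h2
      _ = Real.exp ((2 * p + s) / 1024 + 10 * s) := by rw [Real.exp_add]
      _ ≤ _ := by
        apply Real.exp_le_exp.mpr
        linarith
  obtain ⟨n, hn⟩ : ∃ n, 2 * p = n + 1 := ⟨2 * p - 1, by omega⟩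
  have hn' : (n : ℝ) + 1 = 2 * p := by exact_mod_cast hn.symm
  have hF := fact_exp n
  rw [← hn, hn', show n + 2 = 2 * p + 1 by omega, ← Real.exp_nat_mul, mul_one,
    show (n : ℝ) = 2 * p - 1 by linarith] at hF
  have hF2 : ((2 * p).factorial : ℝ) ≤ (2 * p) ^ (2 * p + 1) * Real.exp (-(2 * p - 1)) := by
    rw [Real.exp_neg, ← div_eq_mul_inv, le_div_iff₀ (Real.exp_pos _)]; exact hF
  have h2p : (2 * p : ℝ) ≤ Real.exp (p / 10) := by
    have := Real.quadratic_le_exp_of_nonneg (show (0 : ℝ) ≤ p / 10 by positivity)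
    nlinarith
  have h4 : (2 : ℝ) ^ (2 * p) ≤ Real.exp (1.39 * p) := by
    have : (2 : ℝ) ≤ Real.exp 0.695 := by
      rw [← Real.log_le_iff_le_exp (by norm_num)]
      linarith [Real.log_two_lt_d9]
    calc (2 : ℝ) ^ (2 * p) ≤ Real.exp 0.695 ^ (2 * p) := by gcongr
      _ = _ := by rw [← Real.exp_nat_mul]; congr 1; push_cast; ring
  calc ((2 * p).factorial : ℝ) * ((2 * p + s).choose s : ℝ)
      ≤ ((2 * p) ^ (2 * p + 1) * Real.exp (-(2 * p - 1))) * Real.exp (p / 256) := by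
        gcongr
    _ = (p : ℝ) ^ (2 * p) * ((2 : ℝ) ^ (2 * p) * (2 * p) * Real.exp (-(2 * p - 1)) *
          Real.exp (p / 256)) := by rw [pow_succ, mul_pow]; ring
    _ ≤ (p : ℝ) ^ (2 * p) * (Real.exp (1.39 * p) * Real.exp (p / 10) * Real.exp (-(2 * p - 1)) *
          Real.exp (p / 256)) := by gcongr
    _ = (p : ℝ) ^ (2 * p) * Real.exp (1.39 * p + p / 10 + (-(2 * p - 1)) + p / 256) := by
        simp only [Real.exp_add]
    _ < (p : ℝ) ^ (2 * p) * 1 := by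
        apply mul_lt_mul_of_pos_left _ (by positivity)
        rw [Real.exp_lt_one_iff]
        linarith
    _ = _ := mul_one _

lemma energy_low {G : Type*} [AddCommGroup G] [DecidableEq G] [Fintype G]
    (h2 : ∀ x : G, x + x = 0)
    {p : ℕ} {Λ Q : Finset G} (hΛ : InLambdaFamily (4 * p) Λ) (hQ : Q ⊆ dDot 2 Λ)
    (K : ℝ) (hK : 1 ≤ K) (hp : 2 ^ 31 * K ≤ p) (hQ0 : 0 < Q.card)
    (hT : (p : ℝ) ^ (2 * p) * (Q.card : ℝ) ^ p / K ^ p ≤ (_root_.addEnergy p Q : ℝ)) :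
    (Q.card : ℝ) ^ 2 / K ^ 2 ≤ fro (adjM Λ Q ^ 2) := by
  by_contra hcon
  push Not at hcon
  have hQ0' : (0 : ℝ) < Q.card := by exact_mod_cast hQ0
  have hK0 : 0 < K := by linarith
  have hp31 : (2 : ℝ) ^ 31 ≤ p := by nlinarith
  have hp31' : 2 ^ 31 ≤ p := by exact_mod_cast hp31
  set ρ := Real.sqrt (Q.card / K) with hρ
  have hρ2 : ρ ^ 2 = Q.card / K := Real.sq_sqrt (by positivity)
  have hρ4 : ρ ^ 4 = (Q.card : ℝ) ^ 2 / K ^ 2 := by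
    rw [show ρ ^ 4 = (ρ ^ 2) ^ 2 by ring, hρ2, div_pow]
  set s := ⌈2 * K⌉₊ with hs
  have hs1 : 2 * K ≤ s := Nat.le_ceil _
  have hs2 : (s : ℝ) < 2 * K + 1 := Nat.ceil_lt_add_one (by positivity)
  have hfro : fro (adjM Λ Q) ≤ s * ρ ^ 2 := by
    have h3 : fro (adjM Λ Q) = ∑ a, ∑ b, adjM Λ Q a b := by
      unfold fro; simp only [adjM_sq]
    rw [h3, hρ2]
    refine (adjM_sum h2 (by omega) hΛ hQ).trans ?_
    calc (2 : ℝ) * Q.card = 2 * K * (Q.card / K) := by field_simp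
      _ ≤ _ := by gcongr
  have htr : (adjM Λ Q).trace = 0 := by
    unfold Matrix.trace
    exact Finset.sum_eq_zero fun a _ => adjM_diag h2 hQ a
  have hc := trace_bound (adjM Λ Q) (adjM_symm Λ Q) htr ρ (Real.sqrt_nonneg _)
    (by rw [hρ4]; exact hcon.le) s (by linarith) hfro
  have hw := wt_bound (wt Q) (fun k => (adjM Λ Q ^ k).trace) (2 * p) s ρ (Real.sqrt_nonneg _)
    (by
      simp only [wt, Nat.factorial_zero, Nat.cast_one, div_one]
      have : (tupSet Q 0 0).card ≤ 1 := by
        refine (Finset.card_le_univ _).trans ?_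
        simp
      exact_mod_cast this) (wt_nonneg Q) hc
    (fun m hm => wt_rec h2 hΛ hQ m (by omega)) (2 * p) le_rfl
  have hTT : ((_root_.addEnergy p Q : ℕ) : ℝ) ≤ ((tupSet Q (2 * p) 0).card : ℝ) := by
    exact_mod_cast addEnergy_le h2 Q p
  unfold wt at hw
  rw [div_le_iff₀ (by positivity)] at hw
  have hρp : ρ ^ (2 * p) = (Q.card : ℝ) ^ p / K ^ p := by rw [pow_mul, hρ2, div_pow]
  have hnum := numeric_fact p s hp31' (by
    have : (s : ℝ) * 2 ^ 29 ≤ p := by nlinarith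
    exact_mod_cast this)
  rw [hρp] at hw
  have hpos : 0 < (Q.card : ℝ) ^ p / K ^ p := by positivity
  have := mul_lt_mul_of_pos_right hnum hpos
  rw [mul_div_assoc] at hT
  linarith

lemma schur_bad {V : Type*} [Fintype V] (A B : Matrix V V ℝ)
    (hB0 : ∀ a b, 0 ≤ B a b) (hBs : ∀ a b, B a b = B b a)
    (hBsq : ∀ a b, B a b ^ 2 = B a b) (hA0 : ∀ a b, 0 ≤ A a b) (hAsq : ∀ a b, A a b ^ 2 = A a b)
    (d : V → ℝ) (hd0 : ∀ a, 0 ≤ d a) (q T : ℝ) (hT : 0 < T)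
    (hd : ∑ a, d a ≤ 2 * q) (hA : ∑ a, ∑ b, A a b ≤ 2 * q)
    (hbad : ∀ a b, B a b ≠ 0 → T < d a * d b) :
    fro (B * A) ≤ 4 * q ^ 2 / T * (2 * q) := by
  have hq : 0 ≤ q := by
    have : 0 ≤ ∑ a, d a := Finset.sum_nonneg fun a _ => hd0 a
    linarith
  set β := 2 * q / √T with hβ
  have hsT : 0 < √T := Real.sqrt_pos.mpr hT
  have hβ0 : 0 ≤ β := by positivity
  have hβ2 : β ^ 2 = 4 * q ^ 2 / T := by
    rw [hβ, div_pow, Real.sq_sqrt hT.le]; ring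
  have hB1 : ∀ a b, B a b ≤ 1 := fun a b => by nlinarith [hBsq a b, hB0 a b, sq_nonneg (B a b - 1)]
  have hschur : ∀ a, ∑ b, B a b * √(d b) ≤ β * √(d a) := by
    intro a
    calc ∑ b, B a b * √(d b) ≤ ∑ b, d b * (√(d a) / √T) := by
          refine Finset.sum_le_sum fun b _ => ?_
          by_cases hz : B a b = 0
          · rw [hz, zero_mul]; have := hd0 b; positivity
          · have h1 := hbad a b hz
            have h3 : √T ≤ √(d a) * √(d b) := by
              rw [← Real.sqrt_mul (hd0 a)]; exact Real.sqrt_le_sqrt h1.le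
            have h4 : B a b * √(d b) ≤ √(d b) := by
              nlinarith [hB1 a b, Real.sqrt_nonneg (d b)]
            refine h4.trans ?_
            rw [← mul_div_assoc, le_div_iff₀ hsT]
            calc √(d b) * √T ≤ √(d b) * (√(d a) * √(d b)) := by gcongr
              _ = (√(d b) * √(d b)) * √(d a) := by ring
              _ = _ := by rw [Real.mul_self_sqrt (hd0 b)]
      _ = (∑ b, d b) * (√(d a) / √T) := by rw [Finset.sum_mul]
      _ ≤ (2 * q) * (√(d a) / √T) := by gcongr
      _ = _ := by rw [hβ]; ring
  have hdpos : ∀ a b, B a b ≠ 0 → √(d b) ≠ 0 := by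
    intro a b hz h0
    have h1 := hbad a b hz
    rw [Real.sqrt_eq_zero (hd0 b)] at h0
    rw [h0, mul_zero] at h1; linarith
  calc fro (B * A) ≤ ∑ a, ∑ c, (β * √(d a)) * ∑ b, B a b * A b c / √(d b) := by
        refine Finset.sum_le_sum fun a _ => Finset.sum_le_sum fun c _ => ?_
        rw [Matrix.mul_apply]
        have h0 : 0 ≤ ∑ b, B a b * A b c / √(d b) := Finset.sum_nonneg fun b _ =>
          div_nonneg (mul_nonneg (hB0 _ _) (hA0 _ _)) (Real.sqrt_nonneg _)
        refine le_trans (Finset.sum_sq_le_sum_mul_sum_of_sq_le_mul Finset.univ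
          (f := fun b => B a b * √(d b)) (g := fun b => B a b * A b c / √(d b))
          (fun b _ => mul_nonneg (hB0 _ _) (Real.sqrt_nonneg _))
          (fun b _ => div_nonneg (mul_nonneg (hB0 _ _) (hA0 _ _)) (Real.sqrt_nonneg _)) ?_)
          (mul_le_mul_of_nonneg_right (hschur a) h0)
        intro b _
        rw [mul_pow, hBsq, hAsq]
        by_cases hz : B a b = 0
        · simp [hz]
        · have := hdpos a b hz
          have hb1 : B a b = 1 := mul_left_cancel₀ hz (by rw [mul_one, ← sq, hBsq])
          rw [hb1]
          field_simp
          exact le_rfl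
    _ = β * ∑ b, ∑ c, A b c / √(d b) * ∑ a, B b a * √(d a) := by
        simp only [Finset.mul_sum]
        rw [Finset.sum_comm]
        rw [Finset.sum_congr rfl fun c _ => Finset.sum_comm]
        rw [Finset.sum_comm]
        refine Finset.sum_congr rfl fun b _ => Finset.sum_congr rfl fun c _ =>
          Finset.sum_congr rfl fun a _ => ?_
        rw [hBs a b]; ring
    _ ≤ β * ∑ b, ∑ c, β * A b c := by
        refine mul_le_mul_of_nonneg_left (Finset.sum_le_sum fun b _ =>
          Finset.sum_le_sum fun c _ => ?_) hβ0
        by_cases hz : √(d b) = 0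
        · rw [hz, div_zero, zero_mul]; exact mul_nonneg hβ0 (hA0 _ _)
        · calc A b c / √(d b) * ∑ a, B b a * √(d a) ≤ A b c / √(d b) * (β * √(d b)) := by
                refine mul_le_mul_of_nonneg_left (hschur b)
                  (div_nonneg (hA0 _ _) (Real.sqrt_nonneg _))
            _ = _ := by field_simp
    _ = β ^ 2 * ∑ b, ∑ c, A b c := by simp only [← Finset.mul_sum]; ring
    _ ≤ β ^ 2 * (2 * q) := by gcongr
    _ = _ := by rw [hβ2]

lemma good_edge {V : Type*} [Fintype V] [DecidableEq V] (A : Matrix V V ℝ)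
    (hA : A.transpose = A) (hA0 : ∀ a b, 0 ≤ A a b) (hAsq : ∀ a b, A a b ^ 2 = A a b)
    (q K : ℝ) (hq : 0 < q) (hK : 1 ≤ K) (hAq : ∑ a, ∑ b, A a b ≤ 2 * q)
    (hE : q ^ 2 / K ^ 2 ≤ fro (A ^ 2)) :
    ∃ a b, A a b ≠ 0 ∧ (∑ c, A a c) * (∑ c, A b c) ≤ 2 ^ 20 * K ^ 4 * q ∧
      0.49 * q / K ^ 2 ≤ (A ^ 3) a b := by
  by_contra hcon
  push Not at hcon
  have hK0 : 0 < K := by linarith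
  set d : V → ℝ := fun a => ∑ c, A a c with hd
  set T := 2 ^ 20 * K ^ 4 * q with hT
  have hT0 : 0 < T := by positivity
  have hAs : ∀ a b, A a b = A b a := fun a b => congrFun (congrFun hA b) a
  set B : Matrix V V ℝ := fun a b => if T < d a * d b then A a b else 0 with hB
  have hA3 : (A ^ 3).transpose = A ^ 3 := by rw [Matrix.transpose_pow, hA]
  have hA30 : ∀ a b, 0 ≤ (A ^ 3) a b := by
    intro a b
    rw [pow_succ, pow_two, Matrix.mul_apply]
    refine Finset.sum_nonneg fun i _ => mul_nonneg ?_ (hA0 _ _)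
    rw [Matrix.mul_apply]
    exact Finset.sum_nonneg fun i _ => mul_nonneg (hA0 _ _) (hA0 _ _)
  have hfroB : fro (B * A) ≤ 4 * q ^ 2 / T * (2 * q) := by
    refine schur_bad A B ?_ ?_ ?_ hA0 hAsq d ?_ q T hT0 hAq hAq ?_
    · intro a b; simp only [hB]; split_ifs; exacts [hA0 _ _, le_rfl]
    · intro a b; simp only [hB, mul_comm (d a), hAs a b]
    · intro a b; simp only [hB]; split_ifs; exacts [hAsq _ _, by norm_num]
    · intro a; exact Finset.sum_nonneg fun _ _ => hA0 _ _
    · intro a b h; by_contra hn; exact h (by simp only [hB]; rw [if_neg hn])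
  have hfroA : fro A ≤ 2 * q := by
    unfold fro; simp only [hAsq]; exact hAq
  have hfroA2 : fro (A ^ 2) ≤ 4 * q ^ 2 := by
    rw [pow_two A]
    refine (fro_mul A A).trans ?_
    nlinarith [fro_nonneg A]
  have htrB : (B * A ^ 3).trace ≤ 0.01 * q ^ 2 / K ^ 2 := by
    have h1 := trace_mul_sq (B * A) (A ^ 2)
    rw [mul_assoc, ← pow_succ'] at h1
    have h3 : (B * A ^ 3).trace ^ 2 ≤ (0.01 * q ^ 2 / K ^ 2) ^ 2 := by
      calc _ ≤ _ := h1
        _ ≤ (4 * q ^ 2 / T * (2 * q)) * (4 * q ^ 2) :=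
          mul_le_mul hfroB hfroA2 (fro_nonneg _) (by positivity)
        _ = (32 / 2 ^ 20) * q ^ 4 / K ^ 4 := by rw [hT]; field_simp; ring
        _ ≤ 0.0001 * q ^ 4 / K ^ 4 := by gcongr; norm_num
        _ = _ := by ring
    exact (abs_le_of_sq_le_sq' h3 (by positivity)).2
  have htrA : fro (A ^ 2) = ∑ a, ∑ b, A a b * (A ^ 3) a b := by
    rw [fro_eq_trace _ (by rw [Matrix.transpose_pow, hA]), ← pow_add,
      show 2 + 2 = 3 + 1 by rfl, pow_succ']
    simp only [Matrix.trace, Matrix.diag, Matrix.mul_apply]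
    refine Finset.sum_congr rfl fun a _ => Finset.sum_congr rfl fun b _ => ?_
    rw [← congrFun (congrFun hA3 a) b]; rfl
  have htrB' : (B * A ^ 3).trace = ∑ a, ∑ b, B a b * (A ^ 3) a b := by
    simp only [Matrix.trace, Matrix.diag, Matrix.mul_apply]
    refine Finset.sum_congr rfl fun a _ => Finset.sum_congr rfl fun b _ => ?_
    rw [← congrFun (congrFun hA3 a) b]; rfl
  have hmain : ∑ a, ∑ b, A a b * (A ^ 3) a b ≤
      ∑ a, ∑ b, (B a b * (A ^ 3) a b + A a b * (0.49 * q / K ^ 2)) := by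
    refine Finset.sum_le_sum fun a _ => Finset.sum_le_sum fun b _ => ?_
    by_cases hbad : T < d a * d b
    · have : B a b = A a b := by simp only [hB]; rw [if_pos hbad]
      rw [this]
      have : 0 ≤ A a b * (0.49 * q / K ^ 2) := mul_nonneg (hA0 _ _) (by positivity)
      linarith
    · have : B a b = 0 := by simp only [hB]; rw [if_neg hbad]
      rw [this, zero_mul, zero_add]
      by_cases hz : A a b = 0
      · simp [hz]
      · exact mul_le_mul_of_nonneg_left (hcon a b hz (not_lt.mp hbad)).le (hA0 _ _)
  simp only [Finset.sum_add_distrib, ← Finset.sum_mul] at hmain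
  rw [← htrA, ← htrB'] at hmain
  have h5 : (∑ a, ∑ b, A a b) * (0.49 * q / K ^ 2) ≤ (2 * q) * (0.49 * q / K ^ 2) := by gcongr
  have h6 : (2 * q) * (0.49 * q / K ^ 2) = 0.98 * (q ^ 2 / K ^ 2) := by ring
  have h7 : 0.01 * q ^ 2 / K ^ 2 = 0.01 * (q ^ 2 / K ^ 2) := by ring
  have h8 : 0 < q ^ 2 / K ^ 2 := by positivity
  linarith

lemma cut_count {V : Type*} [DecidableEq V] (W : Finset V) {x y : V} (hx : x ∈ W) (hy : y ∈ W)
    (hxy : x ≠ y) :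
    2 ^ W.card ≤ 4 * (W.powerset.filter fun U => x ∈ U ∧ y ∉ U).card := by
  have h1 : (((W.erase x).erase y).powerset).card ≤
      (W.powerset.filter fun U => x ∈ U ∧ y ∉ U).card := by
    refine Finset.card_le_card_of_injOn (fun U => insert x U) ?_ ?_
    · intro U hU
      simp only [Finset.coe_powerset, Set.mem_preimage, Set.mem_powerset_iff, Finset.coe_subset] at hU
      simp only [Finset.coe_filter, Finset.mem_powerset, Set.mem_ofPred_eq]
      refine ⟨?_, Finset.mem_insert_self _ _, ?_⟩
      · refine Finset.insert_subset hx (hU.trans ?_)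
        exact (Finset.erase_subset _ _).trans (Finset.erase_subset _ _)
      · intro h
        rcases Finset.mem_insert.mp h with h | h
        · exact hxy h.symm
        · exact Finset.notMem_erase y _ (hU h)
    · intro U hU U' hU' h
      simp only [Finset.coe_powerset, Set.mem_preimage, Set.mem_powerset_iff, Finset.coe_subset] at hU hU'
      have hxU : x ∉ U := fun h => by have := hU h; simp at this
      have hxU' : x ∉ U' := fun h => by have := hU' h; simp at this
      have := congrArg (fun S => Finset.erase S x) h
      simpa [Finset.erase_insert hxU, Finset.erase_insert hxU'] using this
  rw [Finset.card_powerset, Finset.card_erase_of_mem (Finset.mem_erase.mpr ⟨hxy.symm, hy⟩),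
    Finset.card_erase_of_mem hx] at h1
  have h2 : 2 ≤ W.card := by
    have := Finset.card_le_card (show ({x, y} : Finset V) ⊆ W from by
      intro z hz; simp at hz; rcases hz with rfl | rfl <;> assumption)
    rwa [Finset.card_pair hxy] at this
  obtain ⟨k, hk⟩ := Nat.exists_eq_add_of_le h2
  rw [hk] at h1 ⊢
  rw [pow_add]
  have : 2 + k - 1 - 1 = k := by omega
  rw [this] at h1
  omega

lemma cut_lemma {V : Type*} [DecidableEq V] (X Y : Finset V) (E : Finset (V × V))
    (hE : E ⊆ X ×ˢ Y) (hne : ∀ e ∈ E, e.1 ≠ e.2) :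
    ∃ A B, A ⊆ X ∧ B ⊆ Y ∧ Disjoint A B ∧
      E.card ≤ 4 * (E.filter fun e => e.1 ∈ A ∧ e.2 ∈ B).card := by
  set W := X ∪ Y with hW
  have h1 : ∑ U ∈ W.powerset, E.card ≤
      ∑ U ∈ W.powerset, 4 * (E.filter fun e => e.1 ∈ U ∧ e.2 ∉ U).card := by
    rw [Finset.sum_const, Finset.card_powerset, smul_eq_mul, ← Finset.mul_sum]
    have h3 : ∑ U ∈ W.powerset, (E.filter fun e => e.1 ∈ U ∧ e.2 ∉ U).card =
        ∑ e ∈ E, (W.powerset.filter fun U => e.1 ∈ U ∧ e.2 ∉ U).card := by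
      simp only [Finset.card_filter]
      rw [Finset.sum_comm]
    rw [h3, Finset.mul_sum, mul_comm, ← smul_eq_mul, ← Finset.sum_const]
    refine Finset.sum_le_sum fun e he => ?_
    have := Finset.mem_product.mp (hE he)
    exact cut_count W (Finset.mem_union_left _ this.1) (Finset.mem_union_right _ this.2) (hne e he)
  obtain ⟨U, _, hU⟩ := Finset.exists_le_of_sum_le ⟨∅, by simp⟩ h1
  refine ⟨X ∩ U, Y \ U, Finset.inter_subset_left, Finset.sdiff_subset, ?_, ?_⟩
  · rw [Finset.disjoint_left]
    intro z hz hz'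
    exact (Finset.mem_sdiff.mp hz').2 (Finset.mem_inter.mp hz).2
  · refine hU.trans (Nat.mul_le_mul_left _ (Finset.card_le_card ?_))
    intro e he
    simp only [Finset.mem_filter, Finset.mem_inter, Finset.mem_sdiff] at he ⊢
    have := Finset.mem_product.mp (hE he.1)
    exact ⟨he.1, ⟨this.1, he.2.1⟩, this.2, he.2.2⟩

lemma choose_ratio (n d s : ℕ) (δ : ℝ) (hδ : 0 < δ) (hd : δ * n / 2 ≤ d)
    (hs : 4 * (s : ℝ) ≤ δ * n) : (n.choose s : ℝ) * (δ / 4) ^ s ≤ (d.choose s : ℝ) := by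
  have hsd : s ≤ d := by
    have : (s : ℝ) ≤ d := by
      have : (0 : ℝ) ≤ s := by positivity
      linarith
    exact_mod_cast this
  have h1 : ((d : ℝ) + 1 - s) ^ s ≤ (d.descFactorial s : ℝ) := by
    have := Nat.pow_sub_le_descFactorial d s
    have h3 : (((d + 1 - s : ℕ) : ℝ)) ^ s ≤ (d.descFactorial s : ℝ) := by exact_mod_cast this
    rw [Nat.cast_sub (by omega)] at h3
    push_cast at h3; exact h3
  have h2 : (n.descFactorial s : ℝ) ≤ (n : ℝ) ^ s := by exact_mod_cast Nat.descFactorial_le_pow n s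
  have h3 : (n.descFactorial s : ℝ) * (δ / 4) ^ s ≤ (d.descFactorial s : ℝ) := by
    calc _ ≤ (n : ℝ) ^ s * (δ / 4) ^ s := by gcongr
      _ = (δ * n / 4) ^ s := by rw [← mul_pow]; congr 1; ring
      _ ≤ ((d : ℝ) + 1 - s) ^ s := by
        apply pow_le_pow_left₀ (by positivity)
        linarith
      _ ≤ _ := h1
  rw [Nat.descFactorial_eq_factorial_mul_choose, Nat.descFactorial_eq_factorial_mul_choose] at h3
  push_cast at h3
  rw [mul_assoc] at h3
  exact le_of_mul_le_mul_left h3 (by exact_mod_cast s.factorial_pos)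

lemma kst {V : Type*} [DecidableEq V] (A B : Finset V) (R : Finset (V × V))
    (hR : R ⊆ A ×ˢ B) (hA : A.Nonempty) (δ : ℝ) (hδ : 0 < δ)
    (hdens : δ * A.card * B.card ≤ R.card) (s : ℕ) (hs : 4 * (s : ℝ) ≤ δ * A.card)
    (hsA : s ≤ A.card) :
    ∃ S T, S ⊆ A ∧ T ⊆ B ∧ S.card = s ∧ S ×ˢ T ⊆ R ∧
      δ / 2 * (δ / 4) ^ s * B.card ≤ (T.card : ℝ) := by
  set N : V → Finset V := fun b => A.filter fun a => (a, b) ∈ R with hN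
  set B' := B.filter fun b => δ * A.card / 2 ≤ ((N b).card : ℝ) with hB'
  have hA0 : (0 : ℝ) < A.card := by exact_mod_cast hA.card_pos
  have hRsum : (R.card : ℝ) = ∑ b ∈ B, ((N b).card : ℝ) := by
    have : R.card = ∑ b ∈ B, (N b).card := by
      rw [Finset.card_eq_sum_card_fiberwise (f := Prod.snd) (t := B)]
      · refine Finset.sum_congr rfl fun b hb => ?_
        refine Finset.card_bij' (fun e _ => e.1) (fun a _ => (a, b)) ?_ ?_ ?_ ?_
        · rintro ⟨a, c⟩ h
          simp only [Finset.mem_filter] at h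
          obtain ⟨h, rfl⟩ := h
          simp only [hN, Finset.mem_filter]
          exact ⟨(Finset.mem_product.mp (hR h)).1, h⟩
        · intro a h
          simp only [hN, Finset.mem_filter] at h ⊢
          exact ⟨h.2, trivial⟩
        · rintro ⟨a, c⟩ h
          simp only [Finset.mem_filter] at h
          rw [h.2]
        · intro a h; rfl
      · intro e he; exact (Finset.mem_product.mp (hR he)).2
    exact_mod_cast this
  have hB'card : δ / 2 * B.card ≤ (B'.card : ℝ) := by
    have h1 : ∑ b ∈ B, ((N b).card : ℝ) ≤ ∑ b ∈ B, ((if b ∈ B' then (A.card : ℝ) else 0) +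
        δ * A.card / 2) := by
      refine Finset.sum_le_sum fun b hb => ?_
      by_cases hbb : b ∈ B'
      · rw [if_pos hbb]
        have : ((N b).card : ℝ) ≤ A.card := by exact_mod_cast Finset.card_filter_le _ _
        have : 0 ≤ δ * A.card / 2 := by positivity
        linarith
      · rw [if_neg hbb]
        have : ¬ (δ * A.card / 2 ≤ ((N b).card : ℝ)) := fun h =>
          hbb (Finset.mem_filter.mpr ⟨hb, h⟩)
        linarith
    rw [Finset.sum_add_distrib, Finset.sum_const, ← Finset.sum_filter, Finset.sum_const,
      nsmul_eq_mul, nsmul_eq_mul] at h1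
    have h2 : B.filter (fun b => b ∈ B') = B' := by
      ext b; simp only [hB', Finset.mem_filter]; tauto
    rw [h2, ← hRsum] at h1
    have h3 : (δ / 2 * B.card) * A.card ≤ B'.card * A.card := by linarith
    exact le_of_mul_le_mul_right h3 hA0
  have hdc : ∑ S ∈ A.powersetCard s, ((B'.filter fun b => S ⊆ N b).card : ℝ) =
      ∑ b ∈ B', ((N b).card.choose s : ℝ) := by
    have : ∑ S ∈ A.powersetCard s, (B'.filter fun b => S ⊆ N b).card =
      ∑ b ∈ B', (N b).card.choose s := by
      simp only [Finset.card_filter]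
      rw [Finset.sum_comm]
      refine Finset.sum_congr rfl fun b hb => ?_
      rw [← Finset.card_filter, ← Finset.card_powersetCard]
      congr 1
      ext S
      simp only [Finset.mem_filter, Finset.mem_powersetCard]
      constructor
      · rintro ⟨⟨_, h⟩, h'⟩; exact ⟨h', h⟩
      · rintro ⟨h, h'⟩; exact ⟨⟨h.trans (Finset.filter_subset _ _), h'⟩, h⟩
    exact_mod_cast this
  have hle : ∑ S ∈ A.powersetCard s, ((B'.card : ℝ) * (δ / 4) ^ s) ≤
      ∑ S ∈ A.powersetCard s, ((B'.filter fun b => S ⊆ N b).card : ℝ) := by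
    rw [hdc, Finset.sum_const, Finset.card_powersetCard, nsmul_eq_mul]
    calc (A.card.choose s : ℝ) * (B'.card * (δ / 4) ^ s)
        = ∑ b ∈ B', (A.card.choose s : ℝ) * (δ / 4) ^ s := by
          rw [Finset.sum_const, nsmul_eq_mul]; ring
      _ ≤ _ := Finset.sum_le_sum fun b hb =>
          choose_ratio _ _ _ _ hδ (Finset.mem_filter.mp hb).2 hs
  obtain ⟨S, hS, hST⟩ := Finset.exists_le_of_sum_le
    (Finset.powersetCard_nonempty.mpr hsA) hle
  rw [Finset.mem_powersetCard] at hS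
  refine ⟨S, B'.filter fun b => S ⊆ N b, hS.1,
    (Finset.filter_subset _ _).trans (Finset.filter_subset _ _), hS.2, ?_, ?_⟩
  · rintro ⟨a, b⟩ h
    simp only [Finset.mem_product, Finset.mem_filter] at h
    exact (Finset.mem_filter.mp (h.2.2 h.1)).2
  · calc δ / 2 * (δ / 4) ^ s * B.card = (δ / 2 * B.card) * (δ / 4) ^ s := by ring
      _ ≤ B'.card * (δ / 4) ^ s := by gcongr
      _ ≤ _ := hST

lemma peel {V : Type*} [DecidableEq V] (P : Finset V → Finset V → Prop) (θ : ℝ) (hθ : 0 ≤ θ)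
    (k : ℕ) : ∀ (R : Finset (V × V)), R.card = k → 
    (∀ R' ⊆ R, θ ≤ (R'.card : ℝ) → ∃ S T, P S T ∧ (S ×ˢ T).Nonempty ∧ S ×ˢ T ⊆ R') →
    ∃ F : Finset (Finset V × Finset V), (∀ f ∈ F, P f.1 f.2 ∧ f.1 ×ˢ f.2 ⊆ R) ∧
      (∀ f ∈ F, ∀ g ∈ F, f ≠ g → Disjoint (f.1 ×ˢ f.2) (g.1 ×ˢ g.2)) ∧
      (R.card : ℝ) ≤ θ + ((F.biUnion fun f => f.1 ×ˢ f.2).card : ℝ) := by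
  induction k using Nat.strong_induction_on with
  | _ k ih =>
  intro R hRk hyp
  by_cases hlt : θ ≤ (R.card : ℝ)
  swap
  · exact ⟨∅, by simp, by simp, by push Not at hlt; simpa using hlt.le⟩
  obtain ⟨S, T, hP, hne, hsub⟩ := hyp R (Finset.Subset.refl _) hlt
  have hcard := Finset.card_sdiff_of_subset hsub
  have hle := Finset.card_le_card hsub
  have hpos := hne.card_pos
  obtain ⟨F, hF1, hF2, hF3⟩ := ih (R \ (S ×ˢ T)).card (by omega) (R \ (S ×ˢ T)) rfl
    (fun R' hR' h => hyp R' (hR'.trans Finset.sdiff_subset) h)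
  have hdis : ∀ f ∈ F, Disjoint (S ×ˢ T) (f.1 ×ˢ f.2) := by
    intro f hf
    exact (Finset.disjoint_sdiff).mono_right (hF1 f hf).2
  refine ⟨insert (S, T) F, ?_, ?_, ?_⟩
  · intro f hf
    rcases Finset.mem_insert.mp hf with rfl | hf
    · exact ⟨hP, hsub⟩
    · exact ⟨(hF1 f hf).1, (hF1 f hf).2.trans Finset.sdiff_subset⟩
  · intro f hf g hg hfg
    rcases Finset.mem_insert.mp hf with rfl | hf <;> rcases Finset.mem_insert.mp hg with rfl | hg
    · exact absurd rfl hfg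
    · exact hdis g hg
    · exact (hdis f hf).symm
    · exact hF2 f hf g hg hfg
  · rw [Finset.biUnion_insert, Finset.card_union_of_disjoint]
    · have : (R.card : ℝ) = ((R \ (S ×ˢ T)).card : ℝ) + ((S ×ˢ T).card : ℝ) := by
        have : R.card = (R \ (S ×ˢ T)).card + (S ×ˢ T).card := by omega
        exact_mod_cast this
      push_cast
      linarith
    · rw [Finset.disjoint_biUnion_right]
      exact hdis

lemma dense_piece {G : Type*} [AddCommGroup G] [DecidableEq G] [Fintype G]
    (h2 : ∀ x : G, x + x = 0)
    {p : ℕ} {Λ Q : Finset G} (hΛ : InLambdaFamily (4 * p) Λ) (hQ : Q ⊆ dDot 2 Λ)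
    (K : ℝ) (hK : 1 ≤ K) (hp : 2 ^ 31 * K ≤ p) (hQ0 : 0 < Q.card)
    (hT : (p : ℝ) ^ (2 * p) * (Q.card : ℝ) ^ p / K ^ p ≤ (_root_.addEnergy p Q : ℝ)) :
    ∃ A B : Finset G, A ⊆ Λ ∧ B ⊆ Λ ∧ Disjoint A B ∧
      (A.card : ℝ) * B.card ≤ 2 ^ 20 * K ^ 4 * Q.card ∧
      0.1225 * Q.card / K ^ 2 ≤ (((A ×ˢ B).filter fun e => e.1 + e.2 ∈ Q).card : ℝ) := by
  have hE := energy_low h2 hΛ hQ K hK hp hQ0 hT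
  have hQ0' : (0 : ℝ) < Q.card := by exact_mod_cast hQ0
  have hp4 : 4 ≤ 4 * p := by
    have : (1 : ℝ) ≤ p := by nlinarith
    have : 1 ≤ p := by exact_mod_cast this
    omega
  obtain ⟨a, b, hab, hdd, h3⟩ := good_edge (adjM Λ Q) (adjM_symm Λ Q) (adjM_nonneg Λ Q)
    (adjM_sq Λ Q) Q.card K hQ0' hK (adjM_sum h2 hp4 hΛ hQ) hE
  have hmem : a ∈ Λ ∧ b ∈ Λ := by
    unfold adjM at hab
    by_contra hn
    apply hab
    rw [if_neg]
    tauto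
  obtain ⟨ha, hb⟩ := hmem
  have hca : ∑ c, adjM Λ Q a c = ((nb Λ Q a).card : ℝ) := by
    have := sum_nb (Q := Q) ha (fun _ => 1)
    simpa using this.symm
  have hcb : ∑ c, adjM Λ Q b c = ((nb Λ Q b).card : ℝ) := by
    have := sum_nb (Q := Q) hb (fun _ => 1)
    simpa using this.symm
  set E := (nb Λ Q a ×ˢ nb Λ Q b).filter fun e => e.1 + e.2 ∈ Q with hEdef
  have hEcard : (adjM Λ Q ^ 3) a b = (E.card : ℝ) := by
    rw [pow_succ', Matrix.mul_apply, ← sum_nb ha, hEdef, Finset.card_filter, Finset.sum_product]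
    push_cast
    refine Finset.sum_congr rfl fun x hx => ?_
    have hxΛ : x ∈ Λ := (Finset.mem_filter.mp hx).1
    rw [pow_two, Matrix.mul_apply]
    have : ∀ y, adjM Λ Q x y * adjM Λ Q y b = adjM Λ Q b y * adjM Λ Q x y := by
      intro y
      rw [mul_comm]; congr 1
      exact congrFun (congrFun (adjM_symm Λ Q) b) y
    simp only [this]
    rw [← sum_nb hb]
    refine Finset.sum_congr rfl fun y hy => ?_
    have hyΛ : y ∈ Λ := (Finset.mem_filter.mp hy).1
    simp [adjM, hxΛ, hyΛ]
  obtain ⟨A, B, hA, hB, hdis, hcut⟩ := cut_lemma (nb Λ Q a) (nb Λ Q b) E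
    (Finset.filter_subset _ _) (by
      intro e he h
      have := (Finset.mem_filter.mp he).2
      rw [h, h2] at this
      exact zero_notMem h2 hQ this)
  refine ⟨A, B, hA.trans (Finset.filter_subset _ _), hB.trans (Finset.filter_subset _ _), hdis,
    ?_, ?_⟩
  · rw [hca, hcb] at hdd
    refine le_trans ?_ hdd
    have h5 := Finset.card_le_card hA
    have h6 := Finset.card_le_card hB
    gcongr
  · rw [hEcard] at h3
    have h7 : (E.filter fun e => e.1 ∈ A ∧ e.2 ∈ B).card ≤
        ((A ×ˢ B).filter fun e => e.1 + e.2 ∈ Q).card := by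
      refine Finset.card_le_card fun e he => ?_
      simp only [hEdef, Finset.mem_filter, Finset.mem_product] at he ⊢
      exact ⟨he.2, he.1.2⟩
    have h8 : (E.card : ℝ) ≤ 4 * (((A ×ˢ B).filter fun e => e.1 + e.2 ∈ Q).card : ℝ) := by
      exact_mod_cast hcut.trans (Nat.mul_le_mul_left 4 h7)
    have h9 : 0.49 * (Q.card : ℝ) / K ^ 2 = 4 * (0.1225 * Q.card / K ^ 2) := by ring
    linarith

lemma num_s (Z D : ℝ) (hZ : 2 ^ 20 ≤ Z) (hD : Z ^ 4096 ≤ D) (s : ℕ)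
    (hs : (s : ℝ) ≤ Real.logb 2 D / (2 ^ 10 * Real.logb 2 Z) + 1) :
    D ^ (1 / 2 : ℝ) * Z ^ 7 * (Z ^ 6) ^ s ≤ D ∧ 4 * (s : ℝ) * Z ^ 7 ≤ D := by
  have hZ0 : 0 < Z := by linarith [show (0 : ℝ) < 2 ^ 20 by norm_num]
  have hZ1 : 1 ≤ Z := by linarith [show (1 : ℝ) ≤ 2 ^ 20 by norm_num]
  have hD1 : 1 ≤ D := (one_le_pow₀ hZ1).trans hD
  have hD0 : 0 < D := by linarith
  set u := D ^ (1 / 4 : ℝ) with hu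
  have hu0 : 0 < u := Real.rpow_pos_of_pos hD0 _
  have hu4 : u ^ 4 = D := by
    rw [hu, ← Real.rpow_natCast, ← Real.rpow_mul hD0.le]; norm_num
  have hu2 : D ^ (1 / 2 : ℝ) = u ^ 2 := by
    rw [hu, ← Real.rpow_natCast, ← Real.rpow_mul hD0.le]; norm_num
  have huZ : Z ^ 1024 ≤ u := by
    have : (Z ^ 1024) ^ 4 ≤ u ^ 4 := by rw [hu4, ← pow_mul]; exact hD
    exact le_of_pow_le_pow_left₀ (by norm_num) hu0.le this
  have huZ' : Z ^ 14 ≤ u := (pow_le_pow_right₀ hZ1 (by norm_num)).trans huZ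
  have hLZ : 20 ≤ Real.logb 2 Z := by
    rw [Real.le_logb_iff_rpow_le (by norm_num) hZ0]
    exact_mod_cast hZ
  have hLD : 0 ≤ Real.logb 2 D := Real.logb_nonneg (by norm_num) hD1
  constructor
  · have h1 : (Z ^ 6) ^ s ≤ Z ^ 6 * u := by
      have e1 : (Z ^ 6) ^ s = (2 : ℝ) ^ (Real.logb 2 Z * (6 * s)) := by
        rw [Real.rpow_mul (by norm_num), Real.rpow_logb (by norm_num) (by norm_num) hZ0, ← pow_mul]
        rw [← Real.rpow_natCast]; push_cast; rfl
      have e2 : Z ^ 6 * u = (2 : ℝ) ^ (Real.logb 2 Z * 6 + Real.logb 2 D * (1 / 4)) := by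
        rw [Real.rpow_add (by norm_num), Real.rpow_mul (by norm_num), Real.rpow_mul (by norm_num),
          Real.rpow_logb (by norm_num) (by norm_num) hZ0,
          Real.rpow_logb (by norm_num) (by norm_num) hD0, hu]
        norm_cast
      rw [e1, e2]
      apply Real.rpow_le_rpow_of_exponent_le (by norm_num)
      have e3 : Real.logb 2 Z * s ≤ Real.logb 2 D / 2 ^ 10 + Real.logb 2 Z := by
        calc Real.logb 2 Z * s ≤ Real.logb 2 Z * (Real.logb 2 D / (2 ^ 10 * Real.logb 2 Z) + 1) := by
              gcongr
          _ = _ := by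
            have : Real.logb 2 Z ≠ 0 := by linarith
            field_simp
      norm_num at e3
      linarith
    rw [hu2]
    calc u ^ 2 * Z ^ 7 * (Z ^ 6) ^ s ≤ u ^ 2 * Z ^ 7 * (Z ^ 6 * u) := by gcongr
      _ = u ^ 3 * Z ^ 13 := by ring
      _ ≤ u ^ 3 * Z ^ 14 := by gcongr <;> norm_num <;> assumption
      _ ≤ u ^ 3 * u := by gcongr
      _ = D := by rw [← hu4]; ring
  · have h3 : Real.logb 2 D ≤ 8 * u := by
      have h4 : Real.log u ≤ u := Real.log_le_self hu0.le
      have h5 : Real.log D = 4 * Real.log u := by rw [← hu4, Real.log_pow]; norm_num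
      rw [Real.logb, h5, div_le_iff₀ (Real.log_pos (by norm_num))]
      nlinarith [Real.log_two_gt_d9]
    have h6 : (s : ℝ) ≤ 8 * u / (2 ^ 10 * 20) + 1 := by
      refine hs.trans ?_
      gcongr
    have hu1 : 1 ≤ u := (one_le_pow₀ hZ1).trans huZ
    have h7 : 4 * (s : ℝ) ≤ 8 * u := by norm_num at h6; linarith
    calc 4 * (s : ℝ) * Z ^ 7 ≤ 8 * u * Z ^ 7 := by gcongr
      _ ≤ Z * u * Z ^ 7 := by gcongr; linarith [show (8 : ℝ) ≤ 2 ^ 20 by norm_num]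
      _ = u * Z ^ 8 := by ring
      _ ≤ u * Z ^ 14 := by gcongr <;> norm_num <;> assumption
      _ ≤ u * u := by gcongr
      _ ≤ u ^ 4 := by nlinarith [one_le_pow₀ hu1 (n := 2)]
      _ = D := hu4

lemma num_D (K η N q M : ℝ) (p : ℕ) (hK : 1 ≤ K) (hη0 : 0 < η) 
    (hpK : 2 ^ 30 * K / η ≤ (p : ℝ)) (hN : 2 ≤ N)
    (hq : (2 : ℝ) ^ (60 + 2 / η) * K ^ 17 * (p : ℝ) ^ 3 * N *
        max ((2 ^ 30 * K ^ 11 * p) ^ (η * p) * N ^ η * Real.logb 2 N) M ≤ q) :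
    (2 ^ 20 * K) ^ 4096 ≤ q / (K ^ 9 * N) := by
  have hp1 : 2 ^ 30 * K ≤ η * p := by
    rw [div_le_iff₀ hη0] at hpK; linarith
  have hp0 : (1:ℝ) ≤ p := by
    have h0 : (0:ℝ) < p := lt_of_lt_of_le (by positivity) hpK
    have : 0 < p := by exact_mod_cast h0
    exact_mod_cast this
  have hlog : 1 ≤ Real.logb 2 N := by
    rw [Real.le_logb_iff_rpow_le (by norm_num) (by linarith)]; simpa using hN
  have hNη : 1 ≤ N ^ η := Real.one_le_rpow (by linarith) hη0.le
  have hK11 : K ≤ K ^ 11 := le_self_pow₀ hK (by norm_num)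
  have hbase : 2 ^ 20 * K ≤ 2 ^ 30 * K ^ 11 * p := by nlinarith
  have hb1 : (1:ℝ) ≤ 2 ^ 20 * K := by nlinarith
  have hX : (2 ^ 20 * K) ^ 4096 ≤ (2 ^ 30 * K ^ 11 * p) ^ (η * p) * N ^ η * Real.logb 2 N := by
    have h1 : (2 ^ 20 * K) ^ 4096 ≤ (2 ^ 30 * K ^ 11 * p) ^ (η * p) := by
      calc (2 ^ 20 * K) ^ 4096 = (2 ^ 20 * K) ^ ((4096 : ℕ) : ℝ) := (Real.rpow_natCast _ _).symm
        _ ≤ (2 ^ 20 * K) ^ (η * p) := by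
            apply Real.rpow_le_rpow_of_exponent_le hb1
            push_cast; nlinarith
        _ ≤ _ := Real.rpow_le_rpow (by linarith) hbase (by nlinarith)
    have h0 : 0 ≤ (2 ^ 30 * K ^ 11 * p) ^ (η * p) := Real.rpow_nonneg (by linarith) _
    calc _ ≤ (2 ^ 30 * K ^ 11 * p) ^ (η * p) := h1
      _ ≤ (2 ^ 30 * K ^ 11 * p) ^ (η * p) * N ^ η := le_mul_of_one_le_right h0 hNη
      _ ≤ _ := le_mul_of_one_le_right (by positivity) hlog
  rw [le_div_iff₀ (by positivity)]
  refine le_trans ?_ hq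
  have h2 : 1 ≤ (2:ℝ) ^ (60 + 2 / η) := Real.one_le_rpow (by norm_num) (by positivity)
  have h3 : K ^ 9 ≤ K ^ 17 := pow_le_pow_right₀ hK (by norm_num)
  have h4 : (1:ℝ) ≤ (p:ℝ) ^ 3 := one_le_pow₀ hp0
  have h5 := hX.trans (le_max_left _ M)
  have h6 : K ^ 9 * N ≤ (2 : ℝ) ^ (60 + 2 / η) * K ^ 17 * (p : ℝ) ^ 3 * N := by
    gcongr
    calc K ^ 9 ≤ K ^ 17 := h3
      _ ≤ (2 : ℝ) ^ (60 + 2 / η) * K ^ 17 := le_mul_of_one_le_left (by positivity) h2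
      _ ≤ _ := le_mul_of_one_le_right (by positivity) h4
  rw [mul_comm]
  exact mul_le_mul h6 h5 (by positivity) (by positivity)

lemma biclique {V : Type*} [DecidableEq V] (A B : Finset V) (R : Finset (V × V))
    (hR : R ⊆ A ×ˢ B) (K N q : ℝ) (hK : 1 ≤ K) (hN : 0 < N) (hq : 0 < q)
    (hD : (2 ^ 20 * K) ^ 4096 ≤ q / (K ^ 9 * N))
    (hA : (A.card : ℝ) ≤ N) (hB : (B.card : ℝ) ≤ N)
    (hAB : (A.card:ℝ)*B.card ≤ 2^20*K^4*q) (hRc : q / (32 * K ^ 2) ≤ (R.card : ℝ))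
    (s : ℕ) (hs : (s:ℝ) ≤ Real.logb 2 (q / (K ^ 9 * N))/(2^10*Real.logb 2 (2 ^ 20 * K))+1) :
    ∃ S T, S ⊆ A ∧ T ⊆ B ∧ S.card = s ∧ S ×ˢ T ⊆ R ∧
      (q / (K ^ 9 * N)) ^ (1/2:ℝ) ≤ (T.card : ℝ) := by
  have hZ : 2 ^ 20 ≤ 2 ^ 20 * K := by nlinarith
  obtain ⟨n1, n2⟩ := num_s (2 ^ 20 * K) (q / (K ^ 9 * N)) hZ hD s hs
  clear hD
  set D := q / (K ^ 9 * N) with hDdef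
  set Z := 2 ^ 20 * K with hZdef
  have hZ0 : 0 < Z := by positivity
  have hD0 : 0 < D := by positivity
  have hqD : q = D * K ^ 9 * N := by rw [hDdef]; field_simp
  have hcard : (R.card : ℝ) ≤ A.card * B.card := by
    have := card_le_card hR
    rw [card_product] at this; exact_mod_cast this
  have hK7 : 1 ≤ K ^ 7 := one_le_pow₀ hK
  have hθ : D / 32 * N ≤ A.card * B.card := by
    refine le_trans ?_ (hRc.trans hcard)
    rw [hqD, le_div_iff₀ (by positivity)]
    have : D / 32 * N * (32 * K ^ 2) = D * N * K ^ 2 := by ring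
    rw [this]
    have : D * K ^ 9 * N = D * N * K ^ 2 * K ^ 7 := by ring
    rw [this]; exact le_mul_of_one_le_right (by positivity) hK7
  have hA' : D / 32 ≤ A.card := by
    have : (A.card : ℝ) * B.card ≤ A.card * N :=
      mul_le_mul_of_nonneg_left hB (Nat.cast_nonneg _)
    exact le_of_mul_le_mul_right (hθ.trans this) hN
  have hB' : D / 32 ≤ B.card := by
    have : (A.card : ℝ) * B.card ≤ B.card * N := by
      rw [mul_comm]; exact mul_le_mul_of_nonneg_left hA (Nat.cast_nonneg _)
    exact le_of_mul_le_mul_right (hθ.trans this) hN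
  have hA0 : (0:ℝ) < A.card := lt_of_lt_of_le (by positivity) hA'
  set δ : ℝ := 1 / (2 ^ 25 * K ^ 6) with hδ
  have hδ0 : 0 < δ := by positivity
  have hδ1 : δ ≤ 1 := by
    rw [hδ, div_le_one (by positivity)]
    nlinarith [one_le_pow₀ hK (n := 6)]
  have hδZ : 1 / Z ^ 6 ≤ δ / 4 := by
    rw [hδ, div_div]
    apply one_div_le_one_div_of_le (by positivity)
    rw [hZdef, mul_pow]
    have : 0 < K ^ 6 := by positivity
    nlinarith
  have h32 : (32:ℝ) ≤ Z := by linarith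
  have hdA : D / Z ^ 7 ≤ δ * A.card := by
    calc D / Z ^ 7 = 1 / Z ^ 6 * (D / Z) := by field_simp
      _ ≤ δ * (D / 32) := by
          apply mul_le_mul (by linarith) _ (by positivity) hδ0.le
          gcongr
      _ ≤ _ := by gcongr
  have h4s : 4 * (s:ℝ) ≤ δ * A.card := by
    refine le_trans ?_ hdA
    rw [le_div_iff₀ (by positivity)]; exact n2
  have hsA : s ≤ A.card := by
    have : δ * A.card ≤ A.card := mul_le_of_le_one_left hA0.le hδ1
    have h0 : (0:ℝ) ≤ s := Nat.cast_nonneg s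
    have : (s:ℝ) ≤ A.card := by linarith
    exact_mod_cast this
  obtain ⟨S, T, hS, hT, hSc, hST, hTc⟩ := kst A B R hR
    (by rw [← card_pos]; exact_mod_cast hA0) δ hδ0 (by
      refine le_trans ?_ hRc
      rw [mul_assoc, hδ]
      calc 1 / (2 ^ 25 * K ^ 6) * ((A.card:ℝ) * B.card) ≤ 1 / (2 ^ 25 * K ^ 6) * (2^20*K^4*q) := by
            gcongr
        _ = q / (32 * K ^ 2) := by field_simp; norm_num) s h4s hsA
  refine ⟨S, T, hS, hT, hSc, hST, le_trans ?_ hTc⟩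
  calc D ^ (1/2:ℝ) ≤ D / (Z ^ 7 * (Z ^ 6) ^ s) := by
        rw [le_div_iff₀ (by positivity), ← mul_assoc]; exact n1
    _ = 1 / Z ^ 6 * (1 / Z ^ 6) ^ s * (D / Z) := by
        rw [one_div_pow]; field_simp
    _ ≤ δ / 2 * (δ / 4) ^ s * (D / 32) := by
        have hδ2 : 1 / Z ^ 6 ≤ δ / 2 := by linarith
        gcongr
    _ ≤ _ := by gcongr


theorem stmt15 {n : ℕ} (K η : ℝ) (hK : 0 < K) (hη0 : 0 < η) (hη : η ≤ 1 / 2)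
    (p : ℕ) (hp : 0 < p)
    (Λ : Finset (Fin n → ZMod 2)) (hΛ : InLambdaFamily (4 * p) Λ)
    (Q : Finset (Fin n → ZMod 2)) (hQ : Q ⊆ dDot 2 Λ)
    (Kst : ℝ) (hKst : Kst = max 1 K)
    (hpK : 2 ^ 30 * Kst / η ≤ (p : ℝ))
    (hT : (p : ℝ) ^ (2 * p) * (Q.card : ℝ) ^ p / K ^ p ≤ (addEnergy p Q : ℝ))
    (hplog : (p : ℝ) ≤ Real.logb 2 (Λ.card : ℝ) /
      Real.logb 2 (Real.logb 2 (Λ.card : ℝ)))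
    (hQcard : (2 : ℝ) ^ (60 + 2 / η) * Kst ^ 17 * (p : ℝ) ^ 3 * (Λ.card : ℝ) *
        max ((2 ^ 30 * Kst ^ 11 * p) ^ (η * p) * (Λ.card : ℝ) ^ η *
              Real.logb 2 (Λ.card : ℝ))
            (Real.exp (Real.logb 2 (2 ^ 30 * Kst ^ 20) *
              Real.logb 2 ((p : ℝ) * Real.logb 2 Kst / Real.logb 2 (p : ℝ)) /
              Real.logb 2 ((2 : ℝ) ^ (-25 : ℤ) * η * p / Kst)))
        ≤ (Q.card : ℝ)) :
    ∃ (h : ℕ) (L L' : Fin h → Finset (Fin n → ZMod 2)),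
      (∀ i, L i ⊆ Λ) ∧ (∀ i, L' i ⊆ Λ) ∧
      (∀ i j, L i ∩ L' j = ∅) ∧
      (∀ i, L i + L' i ⊆ Q) ∧
      (∀ i, Real.logb 2 ((Q.card : ℝ) / (16 * Kst ^ 9 * Λ.card)) /
        (2 ^ 10 * Real.logb 2 (2 ^ 20 * Kst)) ≤ ((L i).card : ℝ)) ∧
      (∀ i, (1 / (2 ^ 10 * (p : ℝ) ^ 2)) *
        ((Q.card : ℝ) / (Kst ^ 9 * Λ.card)) ^ η ≤ ((L' i).card : ℝ)) ∧
      (∀ i j, i ≠ j → Disjoint (L i + L' i) (L j + L' j)) ∧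
      (Q.card : ℝ) / (16 * Kst ^ 9) ≤
        (((Q ∩ Finset.univ.biUnion fun i => L i + L' i)).card : ℝ) := by
  have h2 : ∀ x : Fin n → ZMod 2, x + x = 0 := fun x => by
    funext i; exact CharTwo.add_self_eq_zero _
  have hK1 : 1 ≤ Kst := by rw [hKst]; exact le_max_left _ _
  have hKK : K ≤ Kst := by rw [hKst]; exact le_max_right _ _
  have hKpos : 0 < Kst := by linarith
  have hpR : (0:ℝ) < p := by exact_mod_cast hp
  have hp31 : 2 ^ 31 * Kst ≤ (p : ℝ) := by
    refine le_trans ?_ hpK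
    rw [le_div_iff₀ hη0]; nlinarith
  have hN2 : 2 ≤ Λ.card := by
    by_contra hcon
    have : Λ.card = 0 ∨ Λ.card = 1 := by omega
    have hl : Real.logb 2 (Λ.card : ℝ) = 0 := by
      rcases this with h | h <;> simp [h]
    rw [hl] at hplog
    simp at hplog
    omega
  have hNR : (2:ℝ) ≤ Λ.card := by exact_mod_cast hN2
  have hD := num_D Kst η Λ.card Q.card _ p hK1 hη0 hpK hNR hQcard
  have hZ1 : (1:ℝ) ≤ 2 ^ 20 * Kst := by nlinarith
  have hD1 : 1 ≤ (Q.card : ℝ) / (Kst ^ 9 * Λ.card) := le_trans (one_le_pow₀ hZ1) hD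
  have hq0 : (0:ℝ) < Q.card := by
    by_contra hcon
    have : (Q.card : ℝ) = 0 := le_antisymm (not_lt.mp hcon) (Nat.cast_nonneg _)
    rw [this] at hD1; norm_num at hD1
  have hT' : (p : ℝ) ^ (2 * p) * (Q.card : ℝ) ^ p / Kst ^ p ≤ (_root_.addEnergy p Q : ℝ) := by
    refine le_trans ?_ hT
    gcongr
  obtain ⟨A, B, hA, hB, hAB, hABc, hRc⟩ := dense_piece h2 hΛ hQ Kst hK1 hp31
    (by exact_mod_cast hq0) hT'
  set R := (A ×ˢ B).filter fun e => e.1 + e.2 ∈ Q with hR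
  set a : ℝ := Real.logb 2 ((Q.card : ℝ) / (16 * Kst ^ 9 * Λ.card)) /
        (2 ^ 10 * Real.logb 2 (2 ^ 20 * Kst)) with ha
  set b : ℝ := (1 / (2 ^ 10 * (p : ℝ) ^ 2)) *
        ((Q.card : ℝ) / (Kst ^ 9 * Λ.card)) ^ η with hb
  have hlZ : 0 < Real.logb 2 (2 ^ 20 * Kst) := Real.logb_pos (by norm_num) (by nlinarith)
  have hD16 : 1 < (Q.card : ℝ) / (16 * Kst ^ 9 * Λ.card) := by
    have e1 : (Q.card : ℝ) / (16 * Kst ^ 9 * Λ.card) = (Q.card : ℝ) / (Kst ^ 9 * Λ.card) / 16 := by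
      field_simp
    rw [e1, lt_div_iff₀ (by norm_num)]
    have : 2 ^ 20 * Kst ≤ (2 ^ 20 * Kst) ^ 4096 := le_self_pow₀ hZ1 (by norm_num)
    linarith
  have ha0 : 0 < a := div_pos (Real.logb_pos (by norm_num) hD16) (by positivity)
  have hs1 : 0 < ⌈a⌉₊ := Nat.ceil_pos.mpr ha0
  have hs2 : ((⌈a⌉₊ : ℕ) : ℝ) ≤ Real.logb 2 ((Q.card : ℝ) / (Kst ^ 9 * Λ.card)) /
      (2^10*Real.logb 2 (2 ^ 20 * Kst))+1 := by
    have h1 := (Nat.ceil_lt_add_one ha0.le).le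
    refine h1.trans ?_
    rw [ha]
    gcongr ?_ / _ + 1
    apply Real.logb_le_logb_of_le (by norm_num) (by positivity)
    gcongr
    have : 0 < Kst ^ 9 := by positivity
    linarith
  have hb0 : 0 < b := by positivity
  have hbD : b ≤ ((Q.card : ℝ) / (Kst ^ 9 * Λ.card)) ^ (1/2:ℝ) := by
    have h1 : ((Q.card : ℝ) / (Kst ^ 9 * Λ.card)) ^ η ≤
      ((Q.card : ℝ) / (Kst ^ 9 * Λ.card)) ^ (1/2:ℝ) := Real.rpow_le_rpow_of_exponent_le hD1 hη
    refine le_trans ?_ h1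
    apply mul_le_of_le_one_left (by positivity)
    rw [div_le_one (by positivity)]
    have : (1:ℝ) ≤ p := by exact_mod_cast hp
    nlinarith
  obtain ⟨F, hF1, hF2, hF3⟩ := peel
    (fun S T => S ⊆ A ∧ T ⊆ B ∧ a ≤ (S.card:ℝ) ∧ b ≤ (T.card:ℝ))
    ((Q.card:ℝ) / (32 * Kst ^ 2)) (by positivity) R.card R rfl (by
      intro R' hR' hc
      obtain ⟨S, T, hS, hT, hSc, hST, hTc⟩ := biclique A B R'
        (hR'.trans (filter_subset _ _)) Kst Λ.card Q.card hK1 (by linarith) hq0 hD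
        (by exact_mod_cast card_le_card hA) (by exact_mod_cast card_le_card hB) hABc hc
        ⌈a⌉₊ hs2
      refine ⟨S, T, ⟨hS, hT, ?_, hbD.trans hTc⟩, ?_, hST⟩
      · rw [hSc]; exact Nat.le_ceil a
      · refine Finset.Nonempty.product ?_ ?_
        · rw [← card_pos, hSc]; exact hs1
        · rw [← card_pos]
          have := lt_of_lt_of_le hb0 (hbD.trans hTc)
          exact_mod_cast this)
  have inj : ∀ x ∈ A ×ˢ B, ∀ y ∈ A ×ˢ B, x.1 + x.2 = y.1 + y.2 → x = y := by
    rintro ⟨x1, x2⟩ hx ⟨y1, y2⟩ hy h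
    rw [mem_product] at hx hy
    rcases aux_pair h2 (by omega : 4 ≤ 4 * p) hΛ (hA hx.1) (hB hx.2) (hA hy.1) (hB hy.2)
      (fun h => disjoint_left.mp hAB hx.1 (h ▸ hx.2)) h with h | h
    · exact Prod.ext h.1 h.2
    · exact absurd hy.2 (h.1 ▸ disjoint_left.mp hAB hx.1)
  have hFR : ∀ f ∈ F, f.1 ×ˢ f.2 ⊆ R := fun f hf => (hF1 f hf).2
  have hRAB : R ⊆ A ×ˢ B := filter_subset _ _
  let e := F.equivFin
  refine ⟨F.card, fun i => (e.symm i).1.1, fun i => (e.symm i).1.2, ?_, ?_, ?_, ?_, ?_, ?_, ?_, ?_⟩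
  · intro i; exact ((hF1 _ (e.symm i).2).1.1).trans hA
  · intro i; exact ((hF1 _ (e.symm i).2).1.2.1).trans hB
  · intro i j
    rw [← disjoint_iff_inter_eq_empty]
    exact disjoint_of_subset_left (hF1 _ (e.symm i).2).1.1
      (disjoint_of_subset_right (hF1 _ (e.symm j).2).1.2.1 hAB)
  · intro i x hx
    obtain ⟨u, hu, v, hv, rfl⟩ := mem_add.mp hx
    exact (mem_filter.mp (hFR _ (e.symm i).2 (mem_product.mpr ⟨hu, hv⟩ : (u, v) ∈ _))).2
  · intro i; exact (hF1 _ (e.symm i).2).1.2.2.1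
  · intro i; exact (hF1 _ (e.symm i).2).1.2.2.2
  · intro i j hij
    rw [disjoint_left]
    intro x hx hx'
    obtain ⟨u, hu, v, hv, rfl⟩ := mem_add.mp hx
    obtain ⟨u', hu', v', hv', h⟩ := mem_add.mp hx'
    have m1 : (u, v) ∈ (e.symm i).1.1 ×ˢ (e.symm i).1.2 := mem_product.mpr ⟨hu, hv⟩
    have m2 : (u', v') ∈ (e.symm j).1.1 ×ˢ (e.symm j).1.2 := mem_product.mpr ⟨hu', hv'⟩
    have heq := inj _ (hRAB (hFR _ (e.symm j).2 m2)) _ (hRAB (hFR _ (e.symm i).2 m1)) h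
    rw [heq] at m2
    have hne : (e.symm i).1 ≠ (e.symm j).1 := fun hh => hij (e.symm.injective (Subtype.ext hh))
    exact disjoint_left.mp (hF2 _ (e.symm i).2 _ (e.symm j).2 hne) m1 m2
  · set U := F.biUnion fun f => f.1 ×ˢ f.2 with hU
    have hUR : U ⊆ R := biUnion_subset.mpr hFR
    have hcardU : U.card ≤
        (Q ∩ Finset.univ.biUnion fun i => (e.symm i).1.1 + (e.symm i).1.2).card := by
      apply card_le_card_of_injOn (fun x => x.1 + x.2)
      · intro x hx
        have hx : x ∈ U := hx
        obtain ⟨f, hf, hxf⟩ := mem_biUnion.mp hx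
        have hxp := mem_product.mp hxf
        refine mem_coe.mpr (mem_inter.mpr ⟨(mem_filter.mp (hUR hx)).2, ?_⟩)
        refine mem_biUnion.mpr ⟨e ⟨f, hf⟩, mem_univ _, ?_⟩
        simp only [Equiv.symm_apply_apply]
        exact add_mem_add hxp.1 hxp.2
      · intro x hx y hy h
        exact inj x (hRAB (hUR hx)) y (hRAB (hUR hy)) h
    have hcU : (U.card : ℝ) ≤
        ((Q ∩ Finset.univ.biUnion fun i => (e.symm i).1.1 + (e.symm i).1.2).card : ℝ) := by
      exact_mod_cast hcardU
    refine le_trans ?_ hcU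
    have h9 : (Q.card : ℝ) / (16 * Kst ^ 9) ≤ Q.card / (16 * Kst ^ 2) := by
      gcongr
      norm_num
    have e1 : (Q.card : ℝ) / (16 * Kst ^ 2) = 1/16 * (Q.card / Kst ^ 2) := by field_simp
    have e2 : (Q.card : ℝ) / (32 * Kst ^ 2) = 1/32 * (Q.card / Kst ^ 2) := by field_simp
    have e3 : 0.1225 * (Q.card : ℝ) / Kst ^ 2 = 0.1225 * (Q.card / Kst ^ 2) := by ring
    have hpos : 0 < (Q.card : ℝ) / Kst ^ 2 := by positivity
    rw [e3] at hRc
    rw [e2] at hF3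
    rw [e1] at h9
    norm_num at hRc hF3 h9 ⊢
    linarith
end
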